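/- arXiv:2507.06716 — 6 statements merged into one kernel-verified Lean document; each statement's English description precedes it below -/
import Mathlib

section
/- Optimality near infinity: let σ ∈ (0,1], σ < α < min{3/2, 1+σ}, and suppose that (−Δ_ℕ)^σ − W_{α,σ} is critical, i.e., Q^σ(f) ≥ Σ_{n≥1} W_{α,σ}(n)f(n)² for all finitely supported f and no nonzero W̃ : ℕ → [0,∞) satisfies Q^σ(f) ≥ Σ_{n≥1}(W_{α,σ}(n)+W̃(n))f(n)² for all finitely supported f. If K ⊆ ℕ is a finite set and W' : ℕ → [0,∞) is such that Q^σ(φ) ≥ Σ_{n≥1}(W_{α,σ}(n)+W'(n))·φ(n)² for every finitely supported φ : ℕ → ℝ vanishing on K, then Σ_{n≥1} W'(n)·I_α(n)² < ∞. -/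
open Real Filter

/-- Generalized binomial coefficient via the Gamma function. -/
noncomputable def rbinom (a b : ℝ) : ℝ :=
  Real.Gamma (a + 1) / (Real.Gamma (b + 1) * Real.Gamma (a - b + 1))

/-- Kernel of the fractional Laplacian `(-Δ_ℕ)^σ` on the discrete half-line. -/
noncomputable def Kker (σ : ℝ) (m n : ℕ) : ℝ :=
  (-1 : ℝ) ^ (m + n) *
    (rbinom (2 * σ) (σ + m - n) - rbinom (2 * σ) (σ + m + n))

/-- Quadratic form of `(-Δ_ℕ)^σ` (used for finitely supported `f` with `f 0 = 0`). -/
noncomputable def Qform (σ : ℝ) (f : ℕ → ℝ) : ℝ :=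
  ∑' m : ℕ, ∑' n : ℕ, Kker σ m n * f m * f n

/-- The Hardy-weight `W_{α,σ}`. -/
noncomputable def Wweight (σ α : ℝ) (n : ℕ) : ℝ :=
  4 ^ σ * (Real.Gamma (3/2 - α + σ) * Real.Gamma α /
            (Real.Gamma (α - σ) * Real.Gamma (3/2 - α))) *
    (Real.Gamma (n + α - σ - 1) * Real.Gamma (n - α + 2) /
      (Real.Gamma (n - α + σ + 2) * Real.Gamma (n + α - 1)))

/-- The Riesz potential `I_α`. -/
noncomputable def Riesz (α : ℝ) (n : ℕ) : ℝ :=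
  (4 * n / (4 ^ α * Real.sqrt 2)) * Real.Gamma (3/2 - α) *
    Real.Gamma (n + α - 1) / (Real.Gamma α * Real.Gamma (n - α + 2))


section Core

lemma Qform_eq_sum (σ : ℝ) (f : ℕ → ℝ) (s : Finset ℕ) (hs : ∀ n, n ∉ s → f n = 0) :
    Qform σ f = ∑ m ∈ s, ∑ n ∈ s, Kker σ m n * f m * f n := by
  unfold Qform
  rw [tsum_eq_sum (s := s)]
  · refine Finset.sum_congr rfl fun m _ => ?_
    rw [tsum_eq_sum (s := s)]
    intro n hn; rw [hs n hn]; ring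
  · intro m hm
    simp [hs m hm]

lemma Wsum_eq_sum (W : ℕ → ℝ) (f : ℕ → ℝ) (s : Finset ℕ) (hs : ∀ n, n ∉ s → f n = 0) :
    ∑' n, W n * f n ^ 2 = ∑ n ∈ s, W n * f n ^ 2 := by
  rw [tsum_eq_sum (s := s)]
  intro n hn; rw [hs n hn]; ring

lemma ground_state {σ : ℝ} {W u : ℕ → ℝ}
    (hsym : ∀ m n, Kker σ m n = Kker σ n m)
    (s : Finset ℕ) (hu : ∀ n ∈ s, 0 < u n)
    (hneg : ∀ m ∈ s, ∀ n ∈ s, m ≠ n → Kker σ m n ≤ 0)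
    (hsup : ∀ m ∈ s, W m * u m ≤ ∑ n ∈ s, Kker σ m n * u n)
    (g : ℕ → ℝ) {a b : ℕ} (ha : a ∈ s) (hb : b ∈ s) (hab : a ≠ b) :
    (-Kker σ a b) * u a * u b * (g a - g b) ^ 2 ≤
      2 * (∑ m ∈ s, ∑ n ∈ s, Kker σ m n * (u m * g m) * (u n * g n)
        - ∑ m ∈ s, W m * (u m * g m) ^ 2) := by
  have h1 : ∑ m ∈ s, ∑ n ∈ s, Kker σ m n * (u m * g m) * (u n * g n)
      = ∑ m ∈ s, (u m * g m ^ 2) * ∑ n ∈ s, Kker σ m n * u n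
        + 1/2 * ∑ m ∈ s, ∑ n ∈ s, (-Kker σ m n) * u m * u n * (g m - g n) ^ 2 := by
    have h2 : ∑ m ∈ s, (u m * g m ^ 2) * ∑ n ∈ s, Kker σ m n * u n =
       1/2 * (∑ m ∈ s, ∑ n ∈ s, Kker σ m n * u m * u n * g m ^ 2
        + ∑ m ∈ s, ∑ n ∈ s, Kker σ m n * u m * u n * g n ^ 2) := by
      have : ∑ m ∈ s, ∑ n ∈ s, Kker σ m n * u m * u n * g n ^ 2
          = ∑ m ∈ s, ∑ n ∈ s, Kker σ m n * u m * u n * g m ^ 2 := by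
        rw [Finset.sum_comm]
        refine Finset.sum_congr rfl fun m _ => Finset.sum_congr rfl fun n _ => ?_
        rw [hsym n m]; ring
      rw [this, ← two_mul, ← mul_assoc]
      norm_num
      refine Finset.sum_congr rfl fun m _ => ?_
      rw [Finset.mul_sum]
      refine Finset.sum_congr rfl fun n _ => ?_
      ring
    rw [h2, ← mul_add, ← Finset.sum_add_distrib, ← Finset.sum_add_distrib, Finset.mul_sum]
    refine Finset.sum_congr rfl fun m _ => ?_
    rw [← Finset.sum_add_distrib, ← Finset.sum_add_distrib, Finset.mul_sum]
    refine Finset.sum_congr rfl fun n _ => ?_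
    ring
  have h3 : ∑ m ∈ s, W m * (u m * g m) ^ 2 ≤
      ∑ m ∈ s, (u m * g m ^ 2) * ∑ n ∈ s, Kker σ m n * u n := by
    refine Finset.sum_le_sum fun m hm => ?_
    have : 0 ≤ u m * g m ^ 2 := mul_nonneg (hu m hm).le (sq_nonneg _)
    have := mul_le_mul_of_nonneg_left (hsup m hm) this
    linarith
  have hnn : ∀ m ∈ s, ∀ n ∈ s, 0 ≤ (-Kker σ m n) * u m * u n * (g m - g n) ^ 2 := by
    intro m hm n hn
    by_cases hmn : m = n
    · subst hmn; simp
    · have := hneg m hm n hn hmn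
      have h1 := hu m hm
      have h2 := hu n hn
      have : 0 ≤ -Kker σ m n := by linarith
      positivity
  have h4 : (-Kker σ a b) * u a * u b * (g a - g b) ^ 2 ≤
      ∑ m ∈ s, ∑ n ∈ s, (-Kker σ m n) * u m * u n * (g m - g n) ^ 2 := by
    refine le_trans ?_ (Finset.single_le_sum (fun m hm => Finset.sum_nonneg (hnn m hm)) ha)
    exact Finset.single_le_sum (f := fun n => (-Kker σ a n) * u a * u n * (g a - g n) ^ 2)
      (fun n hn => hnn a ha n hn) hb
  linarith

theorem core_thm (σ : ℝ) (W u : ℕ → ℝ)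
    (hu : ∀ n, 1 ≤ n → 0 < u n) (hu0 : u 0 = 0)
    (hsym : ∀ m n, Kker σ m n = Kker σ n m)
    (hneg : ∀ m n, 1 ≤ m → 1 ≤ n → m ≠ n → Kker σ m n ≤ 0)
    (hnb : ∀ m, 1 ≤ m → Kker σ m (m + 1) < 0)
    (hsup : ∀ s : Finset ℕ, (∀ n ∈ s, 1 ≤ n) → ∀ m ∈ s,
      W m * u m ≤ ∑ n ∈ s, Kker σ m n * u n)
    (hHardy : ∀ f : ℕ → ℝ, f 0 = 0 → (Function.support f).Finite →
      (∑' n : ℕ, W n * (f n) ^ 2) ≤ Qform σ f)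
    (hCrit : ¬ ∃ Wt : ℕ → ℝ, (∀ n, 0 ≤ Wt n) ∧ (∃ n, 1 ≤ n ∧ Wt n ≠ 0) ∧
      ∀ f : ℕ → ℝ, f 0 = 0 → (Function.support f).Finite →
        (∑' n : ℕ, (W n + Wt n) * (f n) ^ 2) ≤ Qform σ f)
    (K : Finset ℕ) (W' : ℕ → ℝ) (hW' : ∀ n, 0 ≤ W' n)
    (h : ∀ φ : ℕ → ℝ, φ 0 = 0 → (Function.support φ).Finite → (∀ n ∈ K, φ n = 0) →
      (∑' n : ℕ, (W n + W' n) * (φ n) ^ 2) ≤ Qform σ φ) :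
    Summable (fun n : ℕ => W' n * (u n) ^ 2) := by
  classical
  -- null sequence
  have hseq : ∀ k : ℕ, ∃ g : ℕ → ℝ, (Function.support g).Finite ∧ g 0 = 0 ∧ g 1 = 1 ∧
      Qform σ (fun n => u n * g n) - ∑' n, W n * (u n * g n) ^ 2 ≤ 1 / ((k : ℝ) + 1) := by
    intro k
    have hu1 := hu 1 le_rfl
    set ε : ℝ := 1 / ((k : ℝ) + 1) / u 1 ^ 2 with hε
    have hεp : 0 < ε := by positivity
    have : ∃ f : ℕ → ℝ, f 0 = 0 ∧ (Function.support f).Finite ∧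
        Qform σ f < ∑' n : ℕ, (W n + (if n = 1 then ε else 0)) * (f n) ^ 2 := by
      by_contra hcon
      push Not at hcon
      refine hCrit ⟨fun n => if n = 1 then ε else 0, fun n => ?_, ⟨1, le_rfl, ?_⟩, hcon⟩
      · dsimp; split_ifs <;> linarith
      · simp [hεp.ne']
    obtain ⟨f, hf0, hfs, hf⟩ := this
    set s := insert 1 hfs.toFinset
    have hs : ∀ n, n ∉ s → f n = 0 := by
      intro n hn
      by_contra h0
      exact hn (Finset.mem_insert_of_mem (by simpa using h0))
    have hH := hHardy f hf0 hfs
    rw [Qform_eq_sum σ f s hs, Wsum_eq_sum _ f s hs] at hf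
    rw [Qform_eq_sum σ f s hs, Wsum_eq_sum _ f s hs] at hH
    have e1 : ∑ n ∈ s, (W n + (if n = 1 then ε else 0)) * (f n) ^ 2
        = ∑ n ∈ s, W n * f n ^ 2 + ε * f 1 ^ 2 := by
      simp_rw [add_mul]
      rw [Finset.sum_add_distrib]
      congr 1
      simp [ite_mul, s]
    rw [e1] at hf
    have hf1 : f 1 ≠ 0 := by
      intro h0; rw [h0] at hf; simp at hf; linarith
    have hug : ∀ n, u n * (f n * (u 1 / f 1) / u n) = f n * (u 1 / f 1) := by
      intro n
      rcases Nat.eq_zero_or_pos n with rfl | hn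
      · simp [hf0]
      · have := (hu n hn).ne'
        field_simp
    refine ⟨fun n => f n * (u 1 / f 1) / u n, ?_, by simp [hf0], ?_, ?_⟩
    · refine hfs.subset fun n hn => ?_
      simp only [Function.mem_support] at hn ⊢
      intro h0; simp [h0] at hn
    · field_simp
    · simp only [hug]
      have hs' : ∀ n, n ∉ s → f n * (u 1 / f 1) = 0 := fun n hn => by rw [hs n hn]; ring
      rw [Qform_eq_sum σ _ s hs', Wsum_eq_sum _ _ s hs']
      have e2 : ∑ m ∈ s, ∑ n ∈ s, Kker σ m n * (f m * (u 1 / f 1)) * (f n * (u 1 / f 1))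
        = (u 1 / f 1) ^ 2 * ∑ m ∈ s, ∑ n ∈ s, Kker σ m n * f m * f n := by
        rw [Finset.mul_sum]
        refine Finset.sum_congr rfl fun m _ => ?_
        rw [Finset.mul_sum]
        refine Finset.sum_congr rfl fun n _ => ?_
        ring
      have e3 : ∑ n ∈ s, W n * (f n * (u 1 / f 1)) ^ 2
        = (u 1 / f 1) ^ 2 * ∑ n ∈ s, W n * f n ^ 2 := by
        rw [Finset.mul_sum]
        refine Finset.sum_congr rfl fun m _ => ?_
        ring
      rw [e2, e3, ← mul_sub]
      have hp : 0 ≤ (u 1 / f 1) ^ 2 := sq_nonneg _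
      calc _ ≤ (u 1 / f 1) ^ 2 * (ε * f 1 ^ 2) := mul_le_mul_of_nonneg_left (by linarith) hp
        _ = _ := by rw [hε]; field_simp
  choose g hgs hg0 hg1 hgq using hseq
  -- pointwise convergence
  have hlim : ∀ n, 1 ≤ n → Tendsto (fun k => g k n) atTop (nhds 1) := by
    intro n hn
    induction n, hn using Nat.le_induction with
    | base => simp [hg1]
    | succ m hm ih =>
      have hc : 0 < -Kker σ m (m + 1) * u m * u (m + 1) := by
        have := hnb m hm
        have h1 := hu m hm
        have h2 := hu (m + 1) (by omega)
        have : 0 < -Kker σ m (m + 1) := by linarith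
        positivity
      set c := -Kker σ m (m + 1) * u m * u (m + 1)
      have hb : ∀ k, (g k m - g k (m + 1)) ^ 2 ≤ (2 / c) * (1 / ((k : ℝ) + 1)) := by
        intro k
        set s := insert m (insert (m + 1) (hgs k).toFinset)
        have hs : ∀ n, n ∉ s → g k n = 0 := by
          intro n hn
          by_contra h0
          exact hn (Finset.mem_insert_of_mem (Finset.mem_insert_of_mem (by simpa using h0)))
        have hs1 : ∀ n ∈ s, 1 ≤ n := by
          intro n hn
          simp only [s, Finset.mem_insert, Set.Finite.mem_toFinset, Function.mem_support] at hn
          rcases hn with rfl | rfl | hn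
          · exact hm
          · omega
          · rcases Nat.eq_zero_or_pos n with rfl | h1
            · exact absurd (hg0 k) hn
            · exact h1
        have hs' : ∀ n, n ∉ s → u n * g k n = 0 := fun n hn => by rw [hs n hn]; ring
        have := ground_state (W := W) hsym s (fun n hn => hu n (hs1 n hn))
          (fun a ha b hb hab => hneg a b (hs1 a ha) (hs1 b hb) hab) (hsup s hs1) (g k)
          (a := m) (b := m + 1) (by simp [s]) (by simp [s]) (by omega)
        rw [← Wsum_eq_sum W (fun n => u n * g k n) s hs',
          ← Qform_eq_sum σ (fun n => u n * g k n) s hs'] at this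
        have h5 := hgq k
        have h6 : c * (g k m - g k (m + 1)) ^ 2 ≤ 2 * (1 / ((k : ℝ) + 1)) := by
          refine this.trans ?_
          linarith
        rw [div_mul_eq_mul_div, le_div_iff₀ hc]
        linarith
      have hz : Tendsto (fun k : ℕ => (2 / c) * (1 / ((k : ℝ) + 1))) atTop (nhds 0) := by
        simpa using tendsto_one_div_add_atTop_nhds_zero_nat.const_mul (2 / c)
      have hsq : Tendsto (fun k => (g k m - g k (m + 1)) ^ 2) atTop (nhds 0) :=
        squeeze_zero (fun k => sq_nonneg _) hb hz
      have hd : Tendsto (fun k => g k m - g k (m + 1)) atTop (nhds 0) := by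
        rw [tendsto_zero_iff_abs_tendsto_zero]
        have := (Real.continuous_sqrt.tendsto 0).comp hsq
        simpa [Function.comp_def, Real.sqrt_sq_eq_abs] using this
      simpa using ih.sub hd
  have hlimu : ∀ n, Tendsto (fun k => u n * g k n) atTop (nhds (u n)) := by
    intro n
    rcases Nat.eq_zero_or_pos n with rfl | hn
    · simp [hu0]
    · simpa using (hlim n hn).const_mul (u n)
  -- quadratic form of the K part
  set e : ℕ → ℕ → ℝ := fun k n => u n * g k n
  set ψ : ℕ → ℕ → ℝ := fun k n => if n ∈ K then e k n else 0
  set φ : ℕ → ℕ → ℝ := fun k n => if n ∈ K then 0 else e k n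
  have hψs : ∀ k n, n ∉ K → ψ k n = 0 := fun k n hn => by simp [ψ, hn]
  have hψlim : ∃ B : ℝ, ∀ k, Qform σ (ψ k) - ∑' n, W n * ψ k n ^ 2 ≤ B := by
    have hψt : ∀ n ∈ K, Tendsto (fun k => ψ k n) atTop (nhds (u n)) := by
      intro n hn; simpa [ψ, hn] using hlimu n
    have : Tendsto (fun k => Qform σ (ψ k) - ∑' n, W n * ψ k n ^ 2) atTop
        (nhds (∑ m ∈ K, ∑ n ∈ K, Kker σ m n * u m * u n - ∑ n ∈ K, W n * u n ^ 2)) := by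
      have : (fun k => Qform σ (ψ k) - ∑' n, W n * ψ k n ^ 2) = fun k =>
        ∑ m ∈ K, ∑ n ∈ K, Kker σ m n * ψ k m * ψ k n - ∑ n ∈ K, W n * ψ k n ^ 2 := by
        funext k
        rw [Qform_eq_sum σ _ K (hψs k), Wsum_eq_sum _ _ K (hψs k)]
      rw [this]
      refine Tendsto.sub ?_ ?_
      · refine tendsto_finsetSum _ fun m hm => tendsto_finsetSum _ fun n hn => ?_
        exact ((hψt m hm).const_mul _).mul (hψt n hn)
      · exact tendsto_finsetSum _ fun n hn => ((hψt n hn).pow 2).const_mul _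
    obtain ⟨B, hB⟩ := this.bddAbove_range
    exact ⟨B, fun k => hB ⟨k, rfl⟩⟩
  obtain ⟨B, hB⟩ := hψlim
  have hes : ∀ k, (Function.support (e k)).Finite := fun k => (hgs k).subset fun n hn => by
    simp only [Function.mem_support, e] at hn ⊢
    intro h0; simp [h0] at hn
  have he0 : ∀ k, e k 0 = 0 := fun k => by simp [e, hu0]
  have hmain : ∀ k, ∀ F : Finset ℕ, ∑ n ∈ F, W' n * φ k n ^ 2 ≤ 2 + 2 * B := by
    intro k F
    set s := F ∪ K ∪ (hes k).toFinset
    have hs : ∀ n, n ∉ s → e k n = 0 := by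
      intro n hn
      by_contra h0
      exact hn (Finset.mem_union_right _ (by simpa using h0))
    have hsφ : ∀ n, n ∉ s → φ k n = 0 := fun n hn => by simp [φ, hs n hn]
    have hsψ : ∀ n, n ∉ s → ψ k n = 0 := fun n hn => by simp [ψ, hs n hn]
    have hsχ : ∀ n, n ∉ s → (e k n + ψ k n) = 0 := fun n hn => by simp [hsψ n hn, hs n hn]
    have hfin : ∀ f : ℕ → ℝ, (∀ n, n ∉ s → f n = 0) → (Function.support f).Finite := by
      intro f hf
      refine s.finite_toSet.subset fun n hn => ?_
      by_contra h0
      exact hn (hf n h0)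
    have h1 := h (φ k) (by simp [φ, he0]) (hfin _ hsφ) (fun n hn => by simp [φ, hn])
    have h2 := hHardy (fun n => e k n + ψ k n) (by simp [ψ, he0]) (hfin _ hsχ)
    have h3 := hgq k
    have h3' : (1 : ℝ) / ((k : ℝ) + 1) ≤ 1 := by
      rw [div_le_one (by positivity)]
      have : (0 : ℝ) ≤ k := Nat.cast_nonneg k
      linarith
    have h4 := hB k
    change Qform σ (e k) - ∑' n, W n * (e k n) ^ 2 ≤ _ at h3
    rw [Qform_eq_sum σ _ s hsφ, Wsum_eq_sum _ _ s hsφ] at h1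
    rw [Qform_eq_sum σ _ s hsχ, Wsum_eq_sum _ _ s hsχ] at h2
    rw [Qform_eq_sum σ _ s hs, Wsum_eq_sum _ _ s hs] at h3
    rw [Qform_eq_sum σ _ s hsψ, Wsum_eq_sum _ _ s hsψ] at h4
    have hφe : ∀ n, φ k n = e k n - ψ k n := by
      intro n; simp only [φ, ψ]; split_ifs <;> ring
    have par1 : ∑ m ∈ s, ∑ n ∈ s, Kker σ m n * φ k m * φ k n
        + ∑ m ∈ s, ∑ n ∈ s, Kker σ m n * (e k m + ψ k m) * (e k n + ψ k n)
        = 2 * ∑ m ∈ s, ∑ n ∈ s, Kker σ m n * e k m * e k n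
        + 2 * ∑ m ∈ s, ∑ n ∈ s, Kker σ m n * ψ k m * ψ k n := by
      simp only [Finset.mul_sum, ← Finset.sum_add_distrib, hφe]
      refine Finset.sum_congr rfl fun m _ => Finset.sum_congr rfl fun n _ => ?_
      ring
    have par2 : ∑ n ∈ s, W n * φ k n ^ 2 + ∑ n ∈ s, W n * (e k n + ψ k n) ^ 2
        = 2 * ∑ n ∈ s, W n * e k n ^ 2 + 2 * ∑ n ∈ s, W n * ψ k n ^ 2 := by
      simp only [Finset.mul_sum, ← Finset.sum_add_distrib, hφe]
      refine Finset.sum_congr rfl fun m _ => ?_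
      ring
    have h5 : ∑ n ∈ s, (W n + W' n) * φ k n ^ 2
        = ∑ n ∈ s, W n * φ k n ^ 2 + ∑ n ∈ s, W' n * φ k n ^ 2 := by
      simp only [← Finset.sum_add_distrib, add_mul]
    have h6 : ∑ n ∈ F, W' n * φ k n ^ 2 ≤ ∑ n ∈ s, W' n * φ k n ^ 2 := by
      refine Finset.sum_le_sum_of_subset_of_nonneg (fun n hn => by simp [s, hn]) ?_
      intro n _ _
      exact mul_nonneg (hW' n) (sq_nonneg _)
    linarith
  have hfinal : ∀ F : Finset ℕ, ∑ n ∈ F, W' n * (if n ∈ K then 0 else u n) ^ 2 ≤ 2 + 2 * B := by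
    intro F
    have ht : Tendsto (fun k => ∑ n ∈ F, W' n * φ k n ^ 2) atTop
        (nhds (∑ n ∈ F, W' n * (if n ∈ K then 0 else u n) ^ 2)) := by
      refine tendsto_finsetSum _ fun n _ => (Tendsto.pow ?_ 2).const_mul _
      by_cases hn : n ∈ K
      · simp [φ, hn]
      · simpa [φ, hn] using hlimu n
    exact le_of_tendsto ht (Eventually.of_forall fun k => hmain k F)
  have hsum : Summable (fun n => W' n * (if n ∈ K then 0 else u n) ^ 2) :=
    summable_of_sum_le (fun n => mul_nonneg (hW' n) (sq_nonneg _)) hfinal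
  refine hsum.congr_cofinite ?_
  have : (↑K : Set ℕ)ᶜ ∈ cofinite := K.finite_toSet.compl_mem_cofinite
  filter_upwards [this] with n hn
  have : n ∉ K := by simpa using hn
  simp [this]

end Core

section Coeff

/-- Fourier coefficients. -/
noncomputable def Cn (σ : ℝ) (k : ℕ) : ℝ := (-1) ^ k * rbinom (2 * σ) (σ + k)

lemma rbinom_symm (σ x : ℝ) : rbinom (2 * σ) (σ + x) = rbinom (2 * σ) (σ - x) := by
  unfold rbinom
  rw [mul_comm (Real.Gamma (σ + x + 1))]
  congr 3 <;> ring_nf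

lemma Kker_eq (σ : ℝ) (m n : ℕ) :
    Kker σ m n = Cn σ ((m : ℤ) - n).natAbs - Cn σ (m + n) := by
  unfold Kker Cn
  rw [mul_sub]
  congr 1
  · have h1 : (-1 : ℝ) ^ (m + n) = (-1) ^ ((m : ℤ) - n).natAbs := by
      rcases le_total m n with h | h
      · have : ((m : ℤ) - n).natAbs = n - m := by omega
        rw [this]
        have : m + n = (n - m) + 2 * m := by omega
        rw [this, pow_add, pow_mul]; simp
      · have : ((m : ℤ) - n).natAbs = m - n := by omega
        rw [this]
        have : m + n = (m - n) + 2 * n := by omega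
        rw [this, pow_add, pow_mul]; simp
    rw [h1]
    congr 1
    rcases le_total m n with h | h
    · have : ((m : ℤ) - n).natAbs = n - m := by omega
      rw [this, rbinom_symm, Nat.cast_sub h]
      congr 1; ring
    · have : ((m : ℤ) - n).natAbs = m - n := by omega
      rw [this, Nat.cast_sub h]
      congr 1; ring
  · push_cast
    rw [add_assoc]

lemma Kker_symm (σ : ℝ) (m n : ℕ) : Kker σ m n = Kker σ n m := by
  rw [Kker_eq, Kker_eq, add_comm m n]
  congr 2
  omega

lemma Cn_rec {σ : ℝ} (hσ : 0 < σ) (k : ℕ) :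
    ((k : ℝ) + 1 + σ) * Cn σ (k + 1) = (k - σ) * Cn σ k := by
  unfold Cn rbinom
  have h1 : Real.Gamma (σ + ((k + 1 : ℕ) : ℝ) + 1) = (σ + k + 1) * Real.Gamma (σ + k + 1) := by
    rw [← Real.Gamma_add_one (by positivity)]; push_cast; congr 1; ring
  have h0 : (σ + k + 1) ≠ 0 := by positivity
  have hG : Real.Gamma (σ + k + 1) ≠ 0 := (Real.Gamma_pos_of_pos (by positivity)).ne'
  rw [h1]
  have e1 : 2 * σ - (σ + ((k + 1 : ℕ) : ℝ)) + 1 = σ - k := by push_cast; ring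
  have e2 : 2 * σ - (σ + (k : ℝ)) + 1 = (σ - k) + 1 := by ring
  rw [e1, e2, pow_succ]
  by_cases hk : σ - k = 0
  · have : (k : ℝ) - σ = 0 := by linarith
    rw [this, hk]; simp
  · rw [Real.Gamma_add_one hk]
    by_cases hG2 : Real.Gamma (σ - k) = 0
    · simp [hG2]
    · field_simp
      ring

lemma Cn_zero_pos {σ : ℝ} (hσ : 0 < σ) : 0 < Cn σ 0 := by
  unfold Cn rbinom
  have h1 : 0 < Real.Gamma (2 * σ + 1) := Real.Gamma_pos_of_pos (by positivity)
  have h2 : 0 < Real.Gamma (σ + (0 : ℕ) + 1) := Real.Gamma_pos_of_pos (by positivity)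
  have h3 : 0 < Real.Gamma (2 * σ - (σ + (0 : ℕ)) + 1) :=
    Real.Gamma_pos_of_pos (by push_cast; linarith)
  rw [pow_zero, one_mul]
  exact div_pos h1 (mul_pos h2 h3)

lemma Cn_one_neg {σ : ℝ} (hσ : 0 < σ) : Cn σ 1 < 0 := by
  have h := Cn_rec hσ 0
  have h0 := Cn_zero_pos hσ
  simp only [Nat.cast_zero, zero_add, zero_sub] at h
  nlinarith [mul_pos hσ h0]

lemma Cn_nonpos {σ : ℝ} (hσ : 0 < σ) (hσ1 : σ ≤ 1) (k : ℕ) (hk : 1 ≤ k) : Cn σ k ≤ 0 := by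
  induction k, hk using Nat.le_induction with
  | base => exact (Cn_one_neg hσ).le
  | succ k hk ih =>
    have h := Cn_rec hσ k
    have hk' : (1 : ℝ) ≤ k := by exact_mod_cast hk
    have : ((k : ℝ) + 1 + σ) * Cn σ (k + 1) ≤ 0 := by
      rw [h]; exact mul_nonpos_of_nonneg_of_nonpos (by linarith) ih
    by_contra hc
    push Not at hc
    have : 0 < ((k : ℝ) + 1 + σ) * Cn σ (k + 1) := by positivity
    linarith

lemma Cn_step {σ : ℝ} (hσ : 0 < σ) (hσ1 : σ ≤ 1) (k : ℕ) (hk : 1 ≤ k) :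
    Cn σ k ≤ Cn σ (k + 1) := by
  have h := Cn_rec hσ k
  have h1 := Cn_nonpos hσ hσ1 k hk
  have hk' : (1 : ℝ) ≤ k := by exact_mod_cast hk
  have : ((k : ℝ) + 1 + σ) * Cn σ k ≤ ((k : ℝ) + 1 + σ) * Cn σ (k + 1) := by
    rw [h]; nlinarith
  exact le_of_mul_le_mul_left this (by positivity)

lemma Cn_mono {σ : ℝ} (hσ : 0 < σ) (hσ1 : σ ≤ 1) {k l : ℕ} (hk : 1 ≤ k) (hkl : k ≤ l) :
    Cn σ k ≤ Cn σ l := by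
  induction l, hkl using Nat.le_induction with
  | base => exact le_rfl
  | succ l hl ih => exact ih.trans (Cn_step hσ hσ1 l (hk.trans hl))

lemma Cn_one_lt {σ : ℝ} (hσ : 0 < σ) (hσ1 : σ ≤ 1) {l : ℕ} (hl : 2 ≤ l) : Cn σ 1 < Cn σ l := by
  refine lt_of_lt_of_le ?_ (Cn_mono hσ hσ1 (k := 2) (by norm_num) hl)
  have h := Cn_rec hσ 1
  have h1 := Cn_one_neg hσ
  have : (((1 : ℕ) : ℝ) + 1 + σ) * Cn σ 1 < (((1 : ℕ) : ℝ) + 1 + σ) * Cn σ (1 + 1) := by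
    rw [h]; push_cast; nlinarith
  exact lt_of_mul_lt_mul_left this (by positivity)

lemma Kker_nonpos {σ : ℝ} (hσ : 0 < σ) (hσ1 : σ ≤ 1) (m n : ℕ) (h : m ≠ n) :
    Kker σ m n ≤ 0 := by
  rw [Kker_eq]
  have := Cn_mono hσ hσ1 (k := ((m : ℤ) - n).natAbs) (l := m + n) (by omega) (by omega)
  linarith

lemma Kker_nb {σ : ℝ} (hσ : 0 < σ) (hσ1 : σ ≤ 1) (m : ℕ) (h : 1 ≤ m) :
    Kker σ m (m + 1) < 0 := by
  rw [Kker_eq]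
  have h1 : ((m : ℤ) - ((m + 1 : ℕ) : ℤ)).natAbs = 1 := by omega
  rw [h1]
  have := Cn_one_lt hσ hσ1 (l := m + (m + 1)) (by omega)
  linarith

lemma Cn_summable {σ : ℝ} (hσ : 0 < σ) (hσ1 : σ ≤ 1) : Summable (Cn σ) := by
  rw [← summable_nat_add_iff 1]
  have : Summable (fun k => -Cn σ (k + 1)) := by
    refine summable_of_sum_range_le (c := (1 + σ) * (-Cn σ 1) / (2 * σ))
      (fun k => by have := Cn_nonpos hσ hσ1 (k + 1) (by omega); linarith) fun N => ?_
    have key : ∀ N : ℕ, 2 * σ * ∑ i ∈ Finset.range N, -Cn σ (i + 1)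
        = (1 + σ) * (-Cn σ 1) - ((N : ℝ) + 1 + σ) * (-Cn σ (N + 1)) := by
      intro N
      induction N with
      | zero => simp
      | succ N ih =>
        rw [Finset.sum_range_succ, mul_add, ih]
        have := Cn_rec hσ (N + 1)
        push_cast at this ⊢
        linarith
    rw [le_div_iff₀ (by positivity), mul_comm, key]
    have := Cn_nonpos hσ hσ1 (N + 1) (by omega)
    have : 0 ≤ ((N : ℝ) + 1 + σ) * (-Cn σ (N + 1)) := mul_nonneg (by positivity) (by linarith)
    linarith
  simpa using this.neg

lemma Cn_diff {σ : ℝ} (hσ : 0 < σ) (hσ1 : σ ≤ 1) (k : ℕ) (hk : 1 ≤ k) (j : ℕ) :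
    (k : ℝ) * (-Cn σ k) - (k + j) * (-Cn σ (k + j)) ≤ 2 * σ * j * (-Cn σ k) := by
  induction j with
  | zero => simp
  | succ j ih =>
    have h := Cn_rec hσ (k + j)
    have h1 := Cn_nonpos hσ hσ1 (k + j) (by omega)
    have h2 := Cn_mono hσ hσ1 (k := k) (l := k + j) hk (by omega)
    have h3 : ((k + j : ℕ) : ℝ) * (-Cn σ (k + j)) -
      (((k + j : ℕ) : ℝ) + 1) * (-Cn σ (k + j + 1)) ≤ 2 * σ * (-Cn σ (k + j)) := by
      have h5 := mul_le_mul_of_nonneg_left (Cn_step hσ hσ1 (k + j) (by omega)) hσ.le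
      linarith
    have h4 : 2 * σ * (-Cn σ (k + j)) ≤ 2 * σ * (-Cn σ k) := by nlinarith
    have e : k + (j + 1) = k + j + 1 := by ring
    rw [e]
    push_cast at h3 ⊢
    linarith

lemma Kker_mul_summable {σ : ℝ} (hσ : 0 < σ) (hσ1 : σ ≤ 1) (m : ℕ) :
    Summable (fun n : ℕ => |Kker σ m n| * n) := by
  rw [← summable_nat_add_iff (m + 1)]
  have hs : Summable (fun n : ℕ => (4 * σ * m + 2 * m) * (-Cn σ (n + 1))) :=
    (((summable_nat_add_iff 1).2 (Cn_summable hσ hσ1)).neg).mul_left _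
  refine hs.of_nonneg_of_le (fun n => by positivity) fun n => ?_
  have h1 := Kker_nonpos hσ hσ1 m (n + (m + 1)) (by omega)
  rw [abs_of_nonpos h1, Kker_eq]
  have e1 : ((m : ℤ) - ((n + (m + 1) : ℕ) : ℤ)).natAbs = n + 1 := by omega
  have e2 : m + (n + (m + 1)) = (n + 1) + 2 * m := by ring
  rw [e1, e2]
  have h2 := Cn_diff hσ hσ1 (n + 1) (by omega) (2 * m)
  have h3 := Cn_mono hσ hσ1 (k := n + 1) (l := n + 1 + 2 * m) (by omega) (by omega)
  have hm : (0 : ℝ) ≤ m := Nat.cast_nonneg m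
  have h4 := mul_le_mul_of_nonneg_left h3 hm
  push_cast at h2 ⊢
  nlinarith

end Coeff

section Integrals

open MeasureTheory Set

lemma real_beta {a b : ℝ} (ha : 0 < a) (hb : 0 < b) :
    IntegrableOn (fun t : ℝ => t ^ (a - 1) * (1 - t) ^ (b - 1)) (Ioo 0 1) ∧
    ∫ t in Ioo (0 : ℝ) 1, t ^ (a - 1) * (1 - t) ^ (b - 1)
      = Real.Gamma a * Real.Gamma b / Real.Gamma (a + b) := by
  have hconv := Complex.betaIntegral_convergent (u := a) (v := b) (by simpa) (by simpa)
  rw [intervalIntegrable_iff_integrableOn_Ioo_of_le zero_le_one] at hconv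
  have hcongr : EqOn (fun x : ℝ => (x : ℂ) ^ ((a : ℂ) - 1) * (1 - (x : ℂ)) ^ ((b : ℂ) - 1))
      (fun x : ℝ => ((x ^ (a - 1) * (1 - x) ^ (b - 1) : ℝ) : ℂ)) (Ioo 0 1) := by
    intro x hx
    simp only
    rw [Complex.ofReal_mul, Complex.ofReal_cpow hx.1.le,
      Complex.ofReal_cpow (by linarith [hx.2] : (0 : ℝ) ≤ 1 - x)]
    push_cast
    rfl
  have h1 : IntegrableOn (fun x : ℝ => ((x ^ (a - 1) * (1 - x) ^ (b - 1) : ℝ) : ℂ)) (Ioo 0 1) :=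
    hconv.congr_fun hcongr measurableSet_Ioo
  refine ⟨by simpa [IntegrableOn] using h1.re, ?_⟩
  have h2 := ProbabilityTheory.beta_eq_betaIntegralReal a b ha hb
  rw [ProbabilityTheory.beta] at h2
  rw [h2, Complex.betaIntegral, intervalIntegral.integral_of_le zero_le_one,
    integral_Ioc_eq_integral_Ioo, setIntegral_congr_fun measurableSet_Ioo hcongr,
    integral_complex_ofReal, Complex.ofReal_re]

lemma trig_beta {a b : ℝ} (ha : 0 < a) (hb : 0 < b) :
    IntegrableOn (fun θ : ℝ => sin θ / 2 * (((1 - cos θ) / 2) ^ (a - 1) *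
      ((1 + cos θ) / 2) ^ (b - 1))) (Ioo 0 π) ∧
    ∫ θ in Ioo (0 : ℝ) π, sin θ / 2 * (((1 - cos θ) / 2) ^ (a - 1) *
      ((1 + cos θ) / 2) ^ (b - 1))
      = Real.Gamma a * Real.Gamma b / Real.Gamma (a + b) := by
  obtain ⟨h1, h2⟩ := real_beta ha hb
  have hder : ∀ x ∈ Ioo (0 : ℝ) π, HasDerivWithinAt (fun θ => (1 - cos θ) / 2) (sin x / 2)
      (Ioo 0 π) x := by
    intro x _
    have := (((hasDerivAt_cos x).const_sub 1).div_const 2).hasDerivWithinAt (s := Ioo (0 : ℝ) π)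
    simpa using this
  have hinj : InjOn (fun θ : ℝ => (1 - cos θ) / 2) (Ioo 0 π) := by
    intro x hx y hy hxy
    refine injOn_cos (Ioo_subset_Icc_self hx) (Ioo_subset_Icc_self hy) ?_
    simp only at hxy; linarith
  have himg : (fun θ : ℝ => (1 - cos θ) / 2) '' (Ioo 0 π) = Ioo 0 1 := by
    ext t
    constructor
    · rintro ⟨x, hx, rfl⟩
      have h3 : cos x < cos 0 := cos_lt_cos_of_nonneg_of_le_pi le_rfl hx.2.le hx.1
      have h4 : cos π < cos x := cos_lt_cos_of_nonneg_of_le_pi hx.1.le le_rfl hx.2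
      rw [cos_zero] at h3
      rw [cos_pi] at h4
      constructor <;> simp only <;> linarith
    · intro ht
      refine ⟨arccos (1 - 2 * t), ⟨?_, ?_⟩, ?_⟩
      · rw [arccos_pos]; linarith [ht.1]
      · refine lt_of_le_of_ne (arccos_le_pi _) ?_
        intro h; rw [arccos_eq_pi] at h; linarith [ht.2]
      · simp only
        rw [cos_arccos (by linarith [ht.2]) (by linarith [ht.1])]; ring
  have hc : EqOn (fun θ : ℝ => |sin θ / 2| • ((fun t : ℝ => t ^ (a - 1) * (1 - t) ^ (b - 1))
      ((1 - cos θ) / 2))) (fun θ : ℝ => sin θ / 2 * (((1 - cos θ) / 2) ^ (a - 1) *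
      ((1 + cos θ) / 2) ^ (b - 1))) (Ioo 0 π) := by
    intro x hx
    have : 0 < sin x := sin_pos_of_pos_of_lt_pi hx.1 hx.2
    simp only [smul_eq_mul]
    rw [abs_of_pos (by linarith)]
    congr 3; ring
  rw [← himg] at h1 h2
  rw [integrableOn_image_iff_integrableOn_abs_deriv_smul measurableSet_Ioo hder hinj] at h1
  rw [integral_image_eq_integral_abs_deriv_smul measurableSet_Ioo hder hinj] at h2
  refine ⟨h1.congr_fun hc measurableSet_Ioo, ?_⟩
  rw [← h2]
  exact (setIntegral_congr_fun measurableSet_Ioo hc).symm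

lemma cos_bounds {x : ℝ} (hx : x ∈ Ioo (0 : ℝ) π) : cos x < 1 ∧ -1 < cos x := by
  have h3 : cos x < cos 0 := cos_lt_cos_of_nonneg_of_le_pi le_rfl hx.2.le hx.1
  have h4 : cos π < cos x := cos_lt_cos_of_nonneg_of_le_pi hx.1.le le_rfl hx.2
  rw [cos_zero] at h3
  rw [cos_pi] at h4
  exact ⟨h3, h4⟩

lemma sin_half {x : ℝ} (hx : x ∈ Ioo (0 : ℝ) π) :
    sin x / 2 = ((1 - cos x) / 2) ^ (1 / 2 : ℝ) * ((1 + cos x) / 2) ^ (1 / 2 : ℝ) := by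
  obtain ⟨h1, h2⟩ := cos_bounds hx
  rw [← Real.mul_rpow (by linarith) (by linarith), ← Real.sqrt_eq_rpow]
  symm
  rw [Real.sqrt_eq_iff_mul_self_eq (by nlinarith)
    (by have := sin_pos_of_pos_of_lt_pi hx.1 hx.2; linarith)]
  nlinarith [sin_sq_add_cos_sq x]

lemma B_base {s : ℝ} (hs : -(3 / 2) < s) :
    IntegrableOn (fun θ : ℝ => (2 - 2 * cos θ) ^ s * sin θ * sin θ) (Ioo 0 π) ∧
    ∫ θ in Ioo (0 : ℝ) π, (2 - 2 * cos θ) ^ s * sin θ * sin θ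
      = 4 ^ (s + 1) * (Real.Gamma (s + 3 / 2) * Real.Gamma (3 / 2) / Real.Gamma (s + 3)) := by
  obtain ⟨h1, h2⟩ := trig_beta (a := s + 3 / 2) (b := 3 / 2) (by linarith) (by norm_num)
  have hc : EqOn (fun θ : ℝ => 4 ^ (s + 1) * (sin θ / 2 * (((1 - cos θ) / 2) ^ (s + 3 / 2 - 1) *
      ((1 + cos θ) / 2) ^ ((3 / 2 : ℝ) - 1))))
      (fun θ : ℝ => (2 - 2 * cos θ) ^ s * sin θ * sin θ) (Ioo 0 π) := by
    intro x hx
    obtain ⟨h3, h4⟩ := cos_bounds hx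
    simp only
    have e0 := sin_half hx
    have e1 : (2 - 2 * cos x) ^ s = 4 ^ s * ((1 - cos x) / 2) ^ s := by
      rw [← Real.mul_rpow (by norm_num) (by linarith)]; congr 1; ring
    have e2 : ((1 - cos x) / 2) ^ (s + 3 / 2 - 1)
        = ((1 - cos x) / 2) ^ s * ((1 - cos x) / 2) ^ (1 / 2 : ℝ) := by
      rw [← Real.rpow_add (by linarith)]; congr 1; ring
    have e3 : (4 : ℝ) ^ (s + 1) = 4 ^ s * 4 := by
      rw [Real.rpow_add (by norm_num), Real.rpow_one]
    have e4 : (3 / 2 : ℝ) - 1 = 1 / 2 := by norm_num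
    rw [e1, e2, e3, e4]
    have e5 : sin x = 2 * (((1 - cos x) / 2) ^ (1 / 2 : ℝ) * ((1 + cos x) / 2) ^ (1 / 2 : ℝ)) := by
      linarith
    rw [e5]
    ring
  refine ⟨IntegrableOn.congr_fun (h1.const_mul _) hc measurableSet_Ioo, ?_⟩
  rw [← setIntegral_congr_fun measurableSet_Ioo hc, integral_const_mul, h2]
  congr 3; ring_nf

lemma A_base {s : ℝ} (hs : 0 < s) :
    ∫ θ in Ioo (0 : ℝ) π, (2 - 2 * cos θ) ^ s = π * Cn s 0 := by
  obtain ⟨h1, h2⟩ := trig_beta (a := s + 1 / 2) (b := 1 / 2) (by linarith) (by norm_num)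
  have hc : EqOn (fun θ : ℝ => 4 ^ s * (sin θ / 2 * (((1 - cos θ) / 2) ^ (s + 1 / 2 - 1) *
      ((1 + cos θ) / 2) ^ ((1 / 2 : ℝ) - 1))))
      (fun θ : ℝ => (2 - 2 * cos θ) ^ s) (Ioo 0 π) := by
    intro x hx
    obtain ⟨h3, h4⟩ := cos_bounds hx
    simp only
    have e0 := sin_half hx
    have e1 : (2 - 2 * cos x) ^ s = 4 ^ s * ((1 - cos x) / 2) ^ s := by
      rw [← Real.mul_rpow (by norm_num) (by linarith)]; congr 1; ring
    have e2 : ((1 - cos x) / 2) ^ s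
        = ((1 - cos x) / 2) ^ (s + 1 / 2 - 1) * ((1 - cos x) / 2) ^ (1 / 2 : ℝ) := by
      rw [← Real.rpow_add (by linarith)]; congr 1; ring
    have e3 : ((1 + cos x) / 2) ^ ((1 / 2 : ℝ) - 1) * ((1 + cos x) / 2) ^ (1 / 2 : ℝ) = 1 := by
      rw [← Real.rpow_add (by linarith)]; norm_num
    rw [e1, e2, e0]
    calc _ = 4 ^ s * (((1 - cos x) / 2) ^ (s + 1 / 2 - 1) * ((1 - cos x) / 2) ^ (1 / 2 : ℝ)) *
        (((1 + cos x) / 2) ^ ((1 / 2 : ℝ) - 1) * ((1 + cos x) / 2) ^ (1 / 2 : ℝ)) := by ring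
      _ = _ := by rw [e3, mul_one]
  rw [← setIntegral_congr_fun measurableSet_Ioo hc, integral_const_mul, h2]
  unfold Cn rbinom
  have hd := Real.Gamma_mul_Gamma_add_half (s + 1 / 2)
  have e1 : s + 1 / 2 + 1 / 2 = s + 1 := by ring
  have e2 : 2 * (s + 1 / 2) = 2 * s + 1 := by ring
  rw [e1, e2] at hd
  rw [e1, Real.Gamma_one_half_eq]
  have e3 : (2 : ℝ) ^ (1 - (2 * s + 1)) = (4 ^ s)⁻¹ := by
    rw [show (1 - (2 * s + 1)) = -(2 * s) by ring, Real.rpow_neg (by norm_num),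
      Real.rpow_mul (by norm_num)]
    norm_num
  rw [e3] at hd
  have hG : Real.Gamma (s + 1) ≠ 0 := (Real.Gamma_pos_of_pos (by linarith)).ne'
  have h4 : (4 : ℝ) ^ s ≠ 0 := by positivity
  have e4 : 2 * s - (s + ((0 : ℕ) : ℝ)) + 1 = s + 1 := by push_cast; ring
  rw [e4]
  simp only [Nat.cast_zero, add_zero, pow_zero, one_mul]
  have hd' : Real.Gamma (s + 1 / 2) * √π * 4 ^ s = Real.Gamma (2 * s + 1) * π / Real.Gamma (s + 1) := by
    have hpi := Real.mul_self_sqrt Real.pi_pos.le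
    rw [eq_div_iff hG]
    calc _ = (Real.Gamma (s + 1 / 2) * Real.Gamma (s + 1)) * √π * 4 ^ s := by ring
      _ = Real.Gamma (2 * s + 1) * (√π * √π) * ((4 ^ s)⁻¹ * 4 ^ s) := by rw [hd]; ring
      _ = _ := by rw [hpi, inv_mul_cancel₀ h4, mul_one]
  calc _ = (Real.Gamma (s + 1 / 2) * √π * 4 ^ s) / Real.Gamma (s + 1) := by ring
    _ = _ := by rw [hd']; field_simp

end Integrals

section Recs

open MeasureTheory Set

lemma trig_id (n : ℕ) (x : ℝ) :
    (cos (((n : ℝ) + 1) * x) + cos (n * x)) * (2 - 2 * cos x)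
      = 2 * sin x * (sin (((n : ℝ) + 1) * x) - sin (n * x)) := by
  have e : ((n : ℝ) + 1) * x = n * x + x := by ring
  rw [e, cos_add, sin_add]
  have := sin_sq_add_cos_sq x
  linear_combination (-2 * cos (n * x)) * this

lemma hasDeriv_w (p : ℝ) {x : ℝ} (hx : x ∈ Ioo (0 : ℝ) π) :
    HasDerivAt (fun θ : ℝ => (2 - 2 * cos θ) ^ p)
      (2 * sin x * p * (2 - 2 * cos x) ^ (p - 1)) x := by
  have h := cos_bounds hx
  have h1 : HasDerivAt (fun θ : ℝ => 2 - 2 * cos θ) (2 * sin x) x := by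
    simpa using ((hasDerivAt_cos x).const_mul 2).const_sub 2
  exact h1.rpow_const (Or.inl (by linarith))

lemma hasDeriv_sin (c x : ℝ) : HasDerivAt (fun θ : ℝ => sin (c * θ)) (c * cos (c * x)) x := by
  have := ((hasDerivAt_id x).const_mul c).sin
  simpa [mul_comm] using this

lemma cont_w {p : ℝ} (hp : 0 < p) : Continuous (fun θ : ℝ => (2 - 2 * cos θ) ^ p) := by
  refine Continuous.rpow_const (by fun_prop) fun x => Or.inr hp.le

lemma A_formula {s : ℝ} (hs : 0 < s) (n : ℕ) :
    ∫ θ in (0 : ℝ)..π, (2 - 2 * cos θ) ^ s * cos (n * θ) = π * Cn s n := by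
  induction n with
  | zero =>
    simp only [Nat.cast_zero, zero_mul, cos_zero, mul_one]
    rw [intervalIntegral.integral_of_le pi_pos.le, integral_Ioc_eq_integral_Ioo, A_base hs]
  | succ n ih =>
    have hw := cont_w hs
    have hi : ∀ c : ℝ, IntervalIntegrable (fun θ => (2 - 2 * cos θ) ^ s * cos (c * θ)) volume 0 π :=
      fun c => (hw.mul (by fun_prop)).intervalIntegrable _ _
    have hF := intervalIntegral.integral_eq_sub_of_hasDerivAt_of_le pi_pos.le
      (f := fun θ => (2 - 2 * cos θ) ^ s * (sin (((n : ℝ) + 1) * θ) - sin (n * θ)))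
      (f' := fun θ => (s + n + 1) * ((2 - 2 * cos θ) ^ s * cos (((n : ℝ) + 1) * θ))
        + (s - n) * ((2 - 2 * cos θ) ^ s * cos (n * θ)))
      ((hw.mul (by fun_prop)).continuousOn) ?_
      (((hi _).const_mul _).add ((hi _).const_mul _))
    · rw [intervalIntegral.integral_add ((hi _).const_mul _) ((hi _).const_mul _),
        intervalIntegral.integral_const_mul, intervalIntegral.integral_const_mul, ih] at hF
      have e1 : sin (((n : ℝ) + 1) * π) = 0 := by
        have := sin_nat_mul_pi (n + 1); push_cast at this; exact this
      simp only [e1, sin_nat_mul_pi, mul_zero, sin_zero, sub_self] at hF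
      have hr := Cn_rec hs n
      push_cast
      have hne : (s + n + 1) ≠ 0 := by positivity
      apply mul_left_cancel₀ hne
      linear_combination hF - π * hr
    · intro x hx
      have hb := cos_bounds hx
      have := (hasDeriv_w s hx).mul ((hasDeriv_sin ((n : ℝ) + 1) x).sub (hasDeriv_sin n x))
      convert! this using 1
      have e : (2 - 2 * cos x) ^ s = (2 - 2 * cos x) ^ (s - 1) * (2 - 2 * cos x) := by
        conv_rhs => rw [← Real.rpow_add_one (by linarith), sub_add_cancel]
      have ht := trig_id n x
      rw [Pi.sub_apply, e]
      linear_combination (2 - 2 * cos x) ^ (s - 1) * s * ht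

lemma abs_sin_nat_le (n : ℕ) (x : ℝ) : |sin (n * x)| ≤ n * |sin x| := by
  induction n with
  | zero => simp
  | succ n ih =>
    have e : ((n + 1 : ℕ) : ℝ) * x = n * x + x := by push_cast; ring
    rw [e, sin_add]
    calc _ ≤ |sin (n * x) * cos x| + |cos (n * x) * sin x| := abs_add_le _ _
      _ = |sin (n * x)| * |cos x| + |cos (n * x)| * |sin x| := by rw [abs_mul, abs_mul]
      _ ≤ |sin (n * x)| * 1 + 1 * |sin x| := by
        gcongr
        · exact abs_cos_le_one x
        · exact abs_cos_le_one _
      _ ≤ _ := by push_cast; linarith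

/-- integrand of B -/
noncomputable def Bf (s : ℝ) (n : ℕ) (θ : ℝ) : ℝ := (2 - 2 * cos θ) ^ s * sin θ * sin (n * θ)

lemma Bf_meas (s : ℝ) (n : ℕ) : Measurable (Bf s n) := by
  unfold Bf; fun_prop

lemma Bf_bound (s : ℝ) (n : ℕ) (θ : ℝ) :
    |Bf s n θ| ≤ n * ((2 - 2 * cos θ) ^ s * sin θ * sin θ) := by
  unfold Bf
  have h1 : 0 ≤ (2 - 2 * cos θ) ^ s := Real.rpow_nonneg (by linarith [cos_le_one θ]) _
  have h2 := mul_le_mul_of_nonneg_left (abs_sin_nat_le n θ) (mul_nonneg h1 (abs_nonneg (sin θ)))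
  rw [abs_mul, abs_mul, abs_of_nonneg h1]
  have := abs_mul_abs_self (sin θ)
  calc _ ≤ _ := h2
    _ = n * ((2 - 2 * cos θ) ^ s * (|sin θ| * |sin θ|)) := by ring
    _ = _ := by rw [this]; ring

lemma Bf_integrable {s : ℝ} (hs : -(3 / 2) < s) (n : ℕ) : IntegrableOn (Bf s n) (Ioo 0 π) := by
  refine Integrable.mono' ((B_base hs).1.const_mul n) (Bf_meas s n).aestronglyMeasurable ?_
  exact Eventually.of_forall fun θ => by rw [Real.norm_eq_abs]; exact Bf_bound s n θ

lemma B_rec {s : ℝ} (hs : -(3 / 2) < s) (n : ℕ) (hn : 1 ≤ n) :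
    (s + n + 2) / (n + 1) * (∫ θ in Ioo 0 π, Bf s (n + 1) θ)
      = ((n : ℝ) - 1 - s) / n * ∫ θ in Ioo 0 π, Bf s n θ := by
  have hn0 : (n : ℝ) ≠ 0 := by positivity
  have hn1 : (n : ℝ) + 1 ≠ 0 := by positivity
  have hi : ∀ m, IntervalIntegrable (Bf s m) volume 0 π := fun m => by
    rw [intervalIntegrable_iff_integrableOn_Ioo_of_le pi_pos.le]
    exact Bf_integrable hs m
  have hlim : Tendsto (fun θ : ℝ => 2 * (2 - 2 * cos θ) ^ (s + 3 / 2)) (nhdsWithin 0 (Ioi 0))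
      (nhds 0) := by
    have : Continuous (fun θ : ℝ => 2 * (2 - 2 * cos θ) ^ (s + 3 / 2)) :=
      continuous_const.mul (cont_w (by linarith))
    have := (this.tendsto 0).mono_left (nhdsWithin_le_nhds (s := Ioi 0))
    simpa [Real.zero_rpow (show s + 3 / 2 ≠ 0 by linarith)] using this
  have hF := intervalIntegral.integral_eq_sub_of_hasDerivAt_of_tendsto pi_pos
    (f := fun θ => (2 - 2 * cos θ) ^ (s + 1) *
      (sin (((n : ℝ) + 1) * θ) / (n + 1) + sin (n * θ) / n))
    (f' := fun θ => 2 * ((s + n + 2) / (n + 1)) * Bf s (n + 1) θ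
        - 2 * (((n : ℝ) - 1 - s) / n) * Bf s n θ) (fa := 0) (fb := 0)
    ?_ (((hi _).const_mul _).sub ((hi _).const_mul _)) ?_ ?_
  · rw [intervalIntegral.integral_sub ((hi _).const_mul _) ((hi _).const_mul _),
      intervalIntegral.integral_const_mul, intervalIntegral.integral_const_mul,
      intervalIntegral.integral_of_le pi_pos.le, intervalIntegral.integral_of_le pi_pos.le,
      integral_Ioc_eq_integral_Ioo, integral_Ioc_eq_integral_Ioo] at hF
    linarith
  · intro x hx
    have hb := cos_bounds hx
    have := (hasDeriv_w (s + 1) hx).mul (((hasDeriv_sin ((n : ℝ) + 1) x).div_const ((n : ℝ) + 1)).add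
      ((hasDeriv_sin n x).div_const n))
    convert! this using 1
    have e : (2 - 2 * cos x) ^ (s + 1) = (2 - 2 * cos x) ^ s * (2 - 2 * cos x) := by
      rw [← Real.rpow_add_one (by linarith)]
    have ht := trig_id n x
    rw [Pi.add_apply, e, add_sub_cancel_right]
    unfold Bf
    push_cast
    generalize (2 - 2 * cos x) ^ s = w
    field_simp
    linear_combination (-w * n * (n + 1) / 2) * ht
  · refine squeeze_zero_norm' ?_ hlim
    filter_upwards [Ioo_mem_nhdsGT pi_pos] with θ hθ
    have hb := cos_bounds hθ
    have hs0 := sin_pos_of_pos_of_lt_pi hθ.1 hθ.2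
    have hpos : 0 < 2 - 2 * cos θ := by linarith
    have h1 : sin θ ≤ (2 - 2 * cos θ) ^ (1 / 2 : ℝ) := by
      rw [← Real.sqrt_eq_rpow]
      apply Real.le_sqrt_of_sq_le
      nlinarith [sin_sq_add_cos_sq θ]
    have h2 : |sin (((n : ℝ) + 1) * θ) / (n + 1)| ≤ sin θ := by
      rw [abs_div, abs_of_pos (by positivity : (0 : ℝ) < n + 1), div_le_iff₀ (by positivity)]
      have := abs_sin_nat_le (n + 1) θ
      rw [abs_of_pos hs0] at this
      push_cast at this
      linarith
    have h3 : |sin (n * θ) / n| ≤ sin θ := by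
      rw [abs_div, abs_of_pos (by positivity : (0 : ℝ) < n), div_le_iff₀ (by positivity)]
      have := abs_sin_nat_le n θ
      rw [abs_of_pos hs0] at this
      linarith
    rw [Real.norm_eq_abs, abs_mul, abs_of_pos (Real.rpow_pos_of_pos hpos _)]
    have h4 := abs_add_le (sin (((n : ℝ) + 1) * θ) / (n + 1)) (sin (n * θ) / n)
    calc _ ≤ (2 - 2 * cos θ) ^ (s + 1) * (2 * (2 - 2 * cos θ) ^ (1 / 2 : ℝ)) := by
          apply mul_le_mul_of_nonneg_left _ (Real.rpow_pos_of_pos hpos _).le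
          linarith
      _ = 2 * ((2 - 2 * cos θ) ^ (s + 1) * (2 - 2 * cos θ) ^ (1 / 2 : ℝ)) := by ring
      _ = _ := by rw [← Real.rpow_add hpos]; congr 2; ring
  · have hc : ContinuousAt (fun θ => (2 - 2 * cos θ) ^ (s + 1) *
      (sin (((n : ℝ) + 1) * θ) / (n + 1) + sin (n * θ) / n)) π := by
      refine ContinuousAt.mul (ContinuousAt.rpow_const (by fun_prop) (Or.inl ?_)) (by fun_prop)
      rw [cos_pi]; norm_num
    have e1 : sin (((n : ℝ) + 1) * π) = 0 := by
      have := sin_nat_mul_pi (n + 1); push_cast at this; exact this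
    have := hc.tendsto.mono_left (nhdsWithin_le_nhds (s := Iio π))
    simpa [e1] using this

lemma B_formula {s : ℝ} (hs : -(3 / 2) < s) (hs0 : s < 0) (n : ℕ) (hn : 1 ≤ n) :
    ∫ θ in Ioo 0 π, Bf s n θ =
      4 ^ (s + 1) * Real.Gamma (s + 3 / 2) * Real.Gamma (3 / 2) / Real.Gamma (-s) *
        (n * Real.Gamma (n - 1 - s) / Real.Gamma (n + s + 2)) := by
  induction n, hn using Nat.le_induction with
  | base =>
    have h := (B_base hs).2
    have e : ∫ θ in Ioo 0 π, Bf s 1 θ = ∫ θ in Ioo (0 : ℝ) π, (2 - 2 * cos θ) ^ s * sin θ * sin θ := by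
      simp [Bf]
    rw [e, h]
    have e1 : ((1 : ℕ) : ℝ) - 1 - s = -s := by push_cast; ring
    have e2 : ((1 : ℕ) : ℝ) + s + 2 = s + 3 := by push_cast; ring
    rw [e1, e2]
    have : Real.Gamma (-s) ≠ 0 := (Real.Gamma_pos_of_pos (by linarith)).ne'
    push_cast
    field_simp
  | succ n hn ih =>
    have hr := B_rec hs n hn
    have hn' : (1 : ℝ) ≤ n := by exact_mod_cast hn
    rw [ih] at hr
    have g1 : Real.Gamma (((n + 1 : ℕ) : ℝ) - 1 - s) = (n - 1 - s) * Real.Gamma (n - 1 - s) := by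
      rw [← Real.Gamma_add_one (by linarith)]; push_cast; congr 1; ring
    have g2 : Real.Gamma (((n + 1 : ℕ) : ℝ) + s + 2) = (n + s + 2) * Real.Gamma (n + s + 2) := by
      rw [← Real.Gamma_add_one (by linarith)]; push_cast; congr 1; ring
    rw [g1, g2]
    have k1 : Real.Gamma (n + s + 2) ≠ 0 := (Real.Gamma_pos_of_pos (by linarith)).ne'
    have k2 : Real.Gamma (-s) ≠ 0 := (Real.Gamma_pos_of_pos (by linarith)).ne'
    have k3 : (n : ℝ) + s + 2 ≠ 0 := by linarith
    have k4 : (s : ℝ) + n + 2 ≠ 0 := by linarith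
    have k5 : (n : ℝ) ≠ 0 := by linarith
    have k6 : (n : ℝ) + 1 ≠ 0 := by linarith
    have k7 : (s + n + 2) / ((n : ℝ) + 1) ≠ 0 := div_ne_zero k4 k6
    apply mul_left_cancel₀ k7
    rw [hr]
    push_cast
    rw [show s + n + 2 = n + s + 2 by ring]
    field_simp

end Recs

section Fourier

open MeasureTheory Set

lemma fourier_hasSum {σ : ℝ} (hσ : 0 < σ) (hσ1 : σ ≤ 1) (x : ℝ) :
    HasSum (fun k : ℤ => (Cn σ k.natAbs : ℂ) * Complex.exp (Complex.I * k * x))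
      (((2 - 2 * cos x) ^ σ : ℝ) : ℂ) := by
  have : Fact (0 < 2 * π) := ⟨Real.two_pi_pos⟩
  have hwc := cont_w hσ
  have hper : Function.Periodic (fun θ : ℝ => (((2 - 2 * cos θ) ^ σ : ℝ) : ℂ)) (2 * π) := by
    intro θ; simp only [cos_add_two_pi]
  have hcont : Continuous (fun θ : ℝ => (((2 - 2 * cos θ) ^ σ : ℝ) : ℂ)) :=
    Complex.continuous_ofReal.comp hwc
  let f : C(AddCircle (2 * π), ℂ) := ⟨hper.lift, continuous_coinduced_dom.mpr hcont⟩
  have hfx : ∀ y : ℝ, f (y : AddCircle (2 * π)) = (((2 - 2 * cos y) ^ σ : ℝ) : ℂ) := fun y => rfl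
  have hfour : ∀ (k : ℤ) (y : ℝ), fourier k (y : AddCircle (2 * π))
      = Complex.exp (Complex.I * k * y) := by
    intro k y
    rw [fourier_coe_apply]
    congr 1
    have : (π : ℂ) ≠ 0 := by exact_mod_cast Real.pi_ne_zero
    push_cast
    field_simp
  have hcoef : ∀ k : ℤ, fourierCoeff f k = (Cn σ k.natAbs : ℂ) := by
    intro k
    rw [fourierCoeff_eq_intervalIntegral f k (-π)]
    simp only [hfx, hfour, smul_eq_mul]
    have e1 : -π + 2 * π = π := by ring
    rw [e1]
    have hgc : Continuous (fun y : ℝ => Complex.exp (Complex.I * ((-k : ℤ) : ℂ) * y) *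
        (((2 - 2 * cos y) ^ σ : ℝ) : ℂ)) := Continuous.mul (by fun_prop) hcont
    rw [← intervalIntegral.integral_add_adjacent_intervals (b := 0)
      (hgc.intervalIntegrable _ _) (hgc.intervalIntegrable _ _)]
    have e2 := intervalIntegral.integral_comp_neg (a := 0) (b := π)
      (fun y : ℝ => Complex.exp (Complex.I * ((-k : ℤ) : ℂ) * y) *
        (((2 - 2 * cos y) ^ σ : ℝ) : ℂ))
    rw [neg_zero] at e2
    have hgc' : Continuous (fun y : ℝ => Complex.exp (Complex.I * ((-k : ℤ) : ℂ) * ((-y : ℝ) : ℂ)) *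
        (((2 - 2 * cos (-y)) ^ σ : ℝ) : ℂ)) := hgc.comp continuous_neg
    rw [← e2, ← intervalIntegral.integral_add
      (hgc'.intervalIntegrable _ _) (hgc.intervalIntegrable _ _)]
    have e3 : ∀ y : ℝ, Complex.exp (Complex.I * ((-k : ℤ) : ℂ) * ((-y : ℝ) : ℂ)) *
        (((2 - 2 * cos (-y)) ^ σ : ℝ) : ℂ) + Complex.exp (Complex.I * ((-k : ℤ) : ℂ) * y) *
        (((2 - 2 * cos y) ^ σ : ℝ) : ℂ)
        = ((2 * ((2 - 2 * cos y) ^ σ * cos (k.natAbs * y)) : ℝ) : ℂ) := by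
      intro y
      rw [cos_neg]
      have hk : cos ((k.natAbs : ℝ) * y) = cos (k * y) := by
        rcases Int.natAbs_eq k with h | h
        · conv_rhs => rw [h]
          simp
        · conv_rhs => rw [h]
          simp
      rw [hk]
      push_cast
      have h2 := Complex.two_cos ((k : ℂ) * y)
      have e4 : Complex.I * -(k : ℂ) * -(y : ℂ) = (k : ℂ) * y * Complex.I := by ring
      have e5 : Complex.I * -(k : ℂ) * (y : ℂ) = -((k : ℂ) * y) * Complex.I := by ring
      rw [e4, e5]
      linear_combination (-(((2 - 2 * cos y) ^ σ : ℝ) : ℂ)) * h2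
    simp_rw [e3]
    rw [intervalIntegral.integral_ofReal, intervalIntegral.integral_const_mul, A_formula hσ]
    rw [Complex.real_smul]
    have : (π : ℂ) ≠ 0 := by exact_mod_cast Real.pi_ne_zero
    push_cast
    field_simp
  have hsum : Summable (fourierCoeff f) := by
    have h0 : Summable (fun n : ℕ => (Cn σ n : ℂ)) :=
      Complex.ofRealCLM.summable (Cn_summable hσ hσ1)
    have : fourierCoeff f = fun k : ℤ => (Cn σ k.natAbs : ℂ) := funext hcoef
    rw [this]
    refine Summable.of_nat_of_neg ?_ ?_
    · simpa using h0
    · simpa using h0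
  have := has_pointwise_sum_fourier_series_of_summable hsum (x : AddCircle (2 * π))
  simp only [hcoef, hfour, hfx, smul_eq_mul] at this
  exact this

lemma Kker_sin_hasSum {σ : ℝ} (hσ : 0 < σ) (hσ1 : σ ≤ 1) (m : ℕ) (x : ℝ) :
    HasSum (fun n : ℕ => Kker σ m n * sin (n * x)) ((2 - 2 * cos x) ^ σ * sin (m * x)) := by
  have h1 := (fourier_hasSum hσ hσ1 x).mul_left (Complex.exp (Complex.I * m * x))
  have h2 := Complex.hasSum_im h1
  have e : ∀ k : ℤ, (Complex.exp (Complex.I * m * x) *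
      ((Cn σ k.natAbs : ℂ) * Complex.exp (Complex.I * k * x))).im
      = Cn σ k.natAbs * sin (((m + k : ℤ) : ℝ) * x) := by
    intro k
    rw [mul_left_comm, ← Complex.exp_add, Complex.im_ofReal_mul]
    have : Complex.I * m * x + Complex.I * k * x = (((((m + k : ℤ) : ℝ) * x : ℝ)) : ℂ) * Complex.I := by
      push_cast; ring
    rw [this, Complex.exp_ofReal_mul_I_im]
  have e' : (Complex.exp (Complex.I * m * x) * (((2 - 2 * cos x) ^ σ : ℝ) : ℂ)).im
      = (2 - 2 * cos x) ^ σ * sin (m * x) := by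
    rw [mul_comm, Complex.im_ofReal_mul]
    have : Complex.I * m * x = (((m : ℝ) * x : ℝ) : ℂ) * Complex.I := by
      push_cast; ring
    rw [this, Complex.exp_ofReal_mul_I_im]
  simp only [e, e'] at h2
  have h3 := (Equiv.subRight (m : ℤ)).hasSum_iff.2 h2
  have h4 := h3.nat_add_neg
  simp only [Function.comp_def, Equiv.subRight_apply, add_sub_cancel] at h4
  simp only [Int.cast_zero, zero_mul, sin_zero, mul_zero, add_zero] at h4
  convert! h4 using 1
  funext n
  rw [Kker_eq]
  have e1 : ((n : ℤ) - m).natAbs = ((m : ℤ) - n).natAbs := by omega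
  have e2 : (-(n : ℤ) - m).natAbs = m + n := by omega
  rw [e1, e2]
  push_cast
  rw [neg_mul, sin_neg]
  ring

end Fourier

section Final

open MeasureTheory Set

lemma B_hasSum {σ α : ℝ} (hσ : 0 < σ) (hσ1 : σ ≤ 1) (hα : α < 3 / 2) (m : ℕ) :
    HasSum (fun n : ℕ => Kker σ m n * ∫ θ in Ioo 0 π, Bf (-α) n θ)
      (∫ θ in Ioo 0 π, Bf (σ - α) m θ) := by
  have hs : -(3 / 2) < -α := by linarith
  have hsum := Kker_mul_summable hσ hσ1 m
  have := hasSum_integral_of_dominated_convergence (μ := volume.restrict (Ioo (0 : ℝ) π))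
    (F := fun n θ => Kker σ m n * Bf (-α) n θ) (f := fun θ => Bf (σ - α) m θ)
    (fun n θ => |Kker σ m n| * n * ((2 - 2 * cos θ) ^ (-α) * sin θ * sin θ))
    (fun n => ((Bf_meas _ _).const_mul _).aestronglyMeasurable)
    (fun n => Eventually.of_forall fun θ => ?_)
    (Eventually.of_forall fun θ => hsum.mul_right _) ?_ ?_
  · simpa only [integral_const_mul] using this
  · rw [Real.norm_eq_abs, abs_mul, mul_assoc]
    exact mul_le_mul_of_nonneg_left (Bf_bound _ _ _) (abs_nonneg _)
  · simp_rw [tsum_mul_right]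
    exact (B_base hs).1.const_mul _
  · refine (ae_restrict_iff' measurableSet_Ioo).2 (Eventually.of_forall fun θ hθ => ?_)
    have hb := cos_bounds hθ
    have h1 := (Kker_sin_hasSum hσ hσ1 m θ).mul_left ((2 - 2 * cos θ) ^ (-α) * sin θ)
    have e : Bf (σ - α) m θ = (2 - 2 * cos θ) ^ (-α) * sin θ *
        ((2 - 2 * cos θ) ^ σ * sin (m * θ)) := by
      unfold Bf
      rw [show σ - α = -α + σ by ring, Real.rpow_add (by linarith)]
      ring
    rw [e]
    convert! h1 using 1
    funext n
    unfold Bf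
    ring

end Final

/-- Optimality near infinity: if `(-Δ_ℕ)^σ - W_{α,σ}` is critical and the improved
Hardy inequality with an extra weight `W'` holds outside a finite set `K`, then
`Σ W'(n) I_α(n)² < ∞`. -/
theorem stmt_11 (σ α : ℝ) (hσ0 : 0 < σ) (hσ1 : σ ≤ 1)
    (hα1 : σ < α) (hα2 : α < min (3/2) (1 + σ))
    (hHardy : ∀ f : ℕ → ℝ, f 0 = 0 → (Function.support f).Finite →
      (∑' n : ℕ, Wweight σ α n * (f n) ^ 2) ≤ Qform σ f)
    (hCrit : ¬ ∃ Wt : ℕ → ℝ, (∀ n, 0 ≤ Wt n) ∧ (∃ n, 1 ≤ n ∧ Wt n ≠ 0) ∧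
      ∀ f : ℕ → ℝ, f 0 = 0 → (Function.support f).Finite →
        (∑' n : ℕ, (Wweight σ α n + Wt n) * (f n) ^ 2) ≤ Qform σ f)
    (K : Finset ℕ) (W' : ℕ → ℝ) (hW' : ∀ n, 0 ≤ W' n)
    (h : ∀ φ : ℕ → ℝ, φ 0 = 0 → (Function.support φ).Finite → (∀ n ∈ K, φ n = 0) →
      (∑' n : ℕ, (Wweight σ α n + W' n) * (φ n) ^ 2) ≤ Qform σ φ) :
    Summable (fun n : ℕ => W' n * (Riesz α n) ^ 2) := by
  have hα3 : α < 3 / 2 := lt_of_lt_of_le hα2 (min_le_left _ _)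
  have hα4 : α < 1 + σ := lt_of_lt_of_le hα2 (min_le_right _ _)
  have hα0 : 0 < α := hσ0.trans hα1
  set u : ℕ → ℝ := fun n => ∫ θ in Set.Ioo 0 π, Bf (-α) n θ with hu
  have hform : ∀ n : ℕ, 1 ≤ n → u n =
      4 ^ (1 - α) * Real.Gamma (3 / 2 - α) * Real.Gamma (3 / 2) / Real.Gamma α *
        (n * Real.Gamma (n + α - 1) / Real.Gamma (n - α + 2)) := by
    intro n hn
    have := B_formula (s := -α) (by linarith) (by linarith) n hn
    rw [hu]
    simp only
    rw [this, neg_neg, show -α + 1 = 1 - α by ring, show -α + 3 / 2 = 3 / 2 - α by ring,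
      show (n : ℝ) - 1 - -α = n + α - 1 by ring, show (n : ℝ) + -α + 2 = n - α + 2 by ring]
  have g1 : 0 < Real.Gamma (3 / 2 - α) := Real.Gamma_pos_of_pos (by linarith)
  have g2 : 0 < Real.Gamma (3 / 2) := Real.Gamma_pos_of_pos (by norm_num)
  have g3 : 0 < Real.Gamma α := Real.Gamma_pos_of_pos hα0
  have g4 : 0 < Real.Gamma (α - σ) := Real.Gamma_pos_of_pos (by linarith)
  have g5 : ∀ n : ℕ, 1 ≤ n → 0 < Real.Gamma (n + α - 1) := fun n hn => by
    have : (1 : ℝ) ≤ n := by exact_mod_cast hn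
    exact Real.Gamma_pos_of_pos (by linarith)
  have g6 : ∀ n : ℕ, 1 ≤ n → 0 < Real.Gamma (n - α + 2) := fun n hn => by
    have : (1 : ℝ) ≤ n := by exact_mod_cast hn
    exact Real.Gamma_pos_of_pos (by linarith)
  have hupos : ∀ n : ℕ, 1 ≤ n → 0 < u n := by
    intro n hn
    rw [hform n hn]
    have h5 := g5 n hn
    have h6 := g6 n hn
    have : (0 : ℝ) < n := by exact_mod_cast hn
    positivity
  have hu0 : u 0 = 0 := by simp [hu, Bf]
  have hWu : ∀ m : ℕ, 1 ≤ m → ∫ θ in Set.Ioo 0 π, Bf (σ - α) m θ = Wweight σ α m * u m := by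
    intro m hm
    have := B_formula (s := σ - α) (by linarith) (by linarith) m hm
    have h5 := (g5 m hm).ne'
    have h6 := (g6 m hm).ne'
    rw [this, hform m hm, Wweight, show -(σ - α) = α - σ by ring,
      show σ - α + 1 = σ + (1 - α) by ring, Real.rpow_add (by norm_num),
      show σ - α + 3 / 2 = 3 / 2 - α + σ by ring,
      show (m : ℝ) - 1 - (σ - α) = m + α - σ - 1 by ring,
      show (m : ℝ) + (σ - α) + 2 = m - α + σ + 2 by ring]
    generalize Real.Gamma ((m : ℝ) + α - σ - 1) = G1
    generalize Real.Gamma ((m : ℝ) - α + σ + 2) = G2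
    have h1 := g1.ne'
    have h3 := g3.ne'
    have h4 := g4.ne'
    generalize Real.Gamma (3 / 2 - α + σ) = G3
    generalize Real.Gamma (3 / 2 - α) = G4 at h1 ⊢
    by_cases hG2 : G2 = 0
    · simp [hG2]
    · field_simp
  have hsup : ∀ s : Finset ℕ, (∀ n ∈ s, 1 ≤ n) → ∀ m ∈ s,
      Wweight σ α m * u m ≤ ∑ n ∈ s, Kker σ m n * u n := by
    intro s hs m hm
    rw [← hWu m (hs m hm)]
    have h1 := (B_hasSum hσ0 hσ1 hα3 m).neg
    have h2 := sum_le_hasSum s (fun n hn => ?_) h1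
    · simp only [Finset.sum_neg_distrib] at h2
      linarith
    · have hne : m ≠ n := fun h => hn (h ▸ hm)
      have h3 := Kker_nonpos hσ0 hσ1 m n hne
      have h4 : 0 ≤ u n := by
        rcases Nat.eq_zero_or_pos n with rfl | h
        · exact hu0.ge
        · exact (hupos n h).le
      have := mul_nonneg (neg_nonneg.2 h3) h4
      simpa using this
  have hS := core_thm σ (Wweight σ α) u hupos hu0 (Kker_symm σ)
    (fun m n _ _ hmn => Kker_nonpos hσ0 hσ1 m n hmn) (Kker_nb hσ0 hσ1) hsup hHardy hCrit K W' hW' h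
  set κ : ℝ := (4 / (4 ^ α * Real.sqrt 2)) / (4 ^ (1 - α) * Real.Gamma (3 / 2)) with hκ
  have hR : ∀ n : ℕ, Riesz α n = κ * u n := by
    intro n
    rcases Nat.eq_zero_or_pos n with rfl | hn
    · simp [Riesz, hu0]
    · rw [hform n hn, Riesz, hκ]
      have h5 := (g5 n hn).ne'
      have h6 := (g6 n hn).ne'
      have h2 := g2.ne'
      have h3 := g3.ne'
      have : (4 : ℝ) ^ (1 - α) ≠ 0 := by positivity
      have : (4 : ℝ) ^ α ≠ 0 := by positivity
      field_simp
  refine (hS.mul_left (κ ^ 2)).congr fun n => ?_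
  rw [hR]; ring
end

section
/- Let σ ∈ (0,1) and let m > n ≥ 1 be integers. Then K^σ_{m,n} = c_σ·( Γ(m+n−σ)/Γ(m+n+σ+1) − Γ(m−n−σ)/Γ(m−n+σ+1) ), where c_σ := −Γ(σ+1/2)·4^σ/(√π·Γ(−σ)); moreover c_σ > 0. -/
open Real Filter

theorem aux_rbinom (σ : ℝ) (hσ0 : 0 < σ) (hσ1 : σ < 1) (k : ℕ) (hk : 1 ≤ k) :
    rbinom (2 * σ) (σ + k) = (-1 : ℝ) ^ k *
      (Real.Gamma (σ + 1/2) * 4 ^ σ / (Real.sqrt π * Real.Gamma (-σ))) *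
        (Real.Gamma ((k : ℝ) - σ) / Real.Gamma ((k : ℝ) + σ + 1)) := by
  have hk' : (1 : ℝ) ≤ k := by exact_mod_cast hk
  have hs : 0 < Real.sin (π * σ) :=
    Real.sin_pos_of_pos_of_lt_pi (by positivity) (by nlinarith [Real.pi_pos])
  have hpi := Real.pi_pos
  have h1 := Real.Gamma_mul_Gamma_one_sub ((k : ℝ) - σ)
  have h2 := Real.Gamma_mul_Gamma_one_sub (-σ)
  have h3 := Real.Gamma_mul_Gamma_add_half (σ + 1/2)
  have e1 : Real.sin (π * ((k : ℝ) - σ)) = -((-1 : ℝ) ^ k * Real.sin (π * σ)) := by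
    rw [show π * ((k : ℝ) - σ) = k * π - π * σ by ring, Real.sin_nat_mul_pi_sub]
  have e2 : Real.sin (π * (-σ)) = - Real.sin (π * σ) := by
    rw [mul_neg, Real.sin_neg]
  rw [e1, show 1 - ((k : ℝ) - σ) = σ - k + 1 by ring] at h1
  rw [e2, show 1 - -σ = σ + 1 by ring] at h2
  rw [show σ + 1/2 + 1/2 = σ + 1 by ring, show 2 * (σ + 1/2) = 2 * σ + 1 by ring,
    show (1 : ℝ) - (2 * σ + 1) = -(2 * σ) by ring, Real.rpow_neg (by norm_num),
    Real.rpow_mul (by norm_num), show (2 : ℝ) ^ (2 : ℝ) = 4 by norm_num] at h3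
  unfold rbinom
  rw [show 2 * σ - (σ + k) + 1 = σ - k + 1 by ring, show σ + k + 1 = k + σ + 1 by ring]
  have p4 : (0 : ℝ) < 4 ^ σ := by positivity
  have pq : 0 < Real.sqrt π := Real.sqrt_pos.2 hpi
  have g1 : 0 < Real.Gamma (σ + 1) := Real.Gamma_pos_of_pos (by linarith)
  have g2 : 0 < Real.Gamma ((k : ℝ) - σ) := Real.Gamma_pos_of_pos (by linarith)
  have g3 : 0 < Real.Gamma ((k : ℝ) + σ + 1) := Real.Gamma_pos_of_pos (by linarith)
  have hu : ((-1 : ℝ) ^ k) * (-1) ^ k = 1 := by rw [← mul_pow]; norm_num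
  have hu0 : ((-1 : ℝ) ^ k) ≠ 0 := by positivity
  generalize (-1 : ℝ) ^ k = u at *
  have a1 : Real.Gamma (σ - k + 1) ≠ 0 := by
    intro h
    rw [h, mul_zero] at h1
    exact (div_ne_zero hpi.ne' (neg_ne_zero.2 (mul_ne_zero hu0 hs.ne'))) h1.symm
  have a2 : Real.Gamma (-σ) ≠ 0 := by
    intro h
    rw [h, zero_mul] at h2
    exact (div_ne_zero hpi.ne' (neg_ne_zero.2 hs.ne')) h2.symm
  have key : Real.Gamma (-σ) * Real.Gamma (σ + 1)
      = u * (Real.Gamma ((k : ℝ) - σ) * Real.Gamma (σ - k + 1)) := by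
    rw [h1, h2]; field_simp
  have key3 : Real.Gamma (σ + 1/2) * Real.Gamma (σ + 1) * 4 ^ σ
      = Real.Gamma (2 * σ + 1) * Real.sqrt π := by
    rw [h3]; field_simp
  generalize Real.Gamma (σ + 1/2) = A at *
  generalize Real.Gamma (2 * σ + 1) = B at *
  generalize Real.Gamma (σ - k + 1) = C at *
  generalize Real.Gamma (-σ) = D at *
  generalize Real.Gamma (σ + 1) = E at *
  generalize Real.Gamma ((k : ℝ) - σ) = F at *
  generalize Real.Gamma ((k : ℝ) + σ + 1) = G at *
  generalize (4 : ℝ) ^ σ = H at *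
  generalize Real.sqrt π = P at *
  field_simp
  apply mul_right_cancel₀ g1.ne'
  linear_combination B * P * key - u * F * C * key3

/-- Closed form of the kernel `K^σ_{m,n}` for `m > n ≥ 1`, with positive constant `c_σ`. -/
theorem stmt_14 (σ : ℝ) (hσ0 : 0 < σ) (hσ1 : σ < 1)
    (m n : ℕ) (hn : 1 ≤ n) (hmn : n < m) :
    Kker σ m n =
      (-(Real.Gamma (σ + 1/2) * 4 ^ σ / (Real.sqrt π * Real.Gamma (-σ)))) *
        (Real.Gamma ((m : ℝ) + n - σ) / Real.Gamma ((m : ℝ) + n + σ + 1) -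
          Real.Gamma ((m : ℝ) - n - σ) / Real.Gamma ((m : ℝ) - n + σ + 1)) ∧
    0 < -(Real.Gamma (σ + 1/2) * 4 ^ σ / (Real.sqrt π * Real.Gamma (-σ))) := by
  have hs : Real.Gamma (-σ) < 0 := by
    have h := Real.Gamma_add_one (s := -σ) (by linarith)
    have : 0 < Real.Gamma (-σ + 1) := Real.Gamma_pos_of_pos (by linarith)
    by_contra! hc
    nlinarith
  constructor
  · obtain ⟨d, rfl⟩ := Nat.exists_eq_add_of_lt hmn
    have h1 := aux_rbinom σ hσ0 hσ1 (d + 1) (by omega)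
    have h2 := aux_rbinom σ hσ0 hσ1 (n + d + 1 + n) (by omega)
    unfold Kker
    rw [show σ + ((n + d + 1 : ℕ) : ℝ) - n = σ + ((d + 1 : ℕ) : ℝ) by push_cast; ring,
      show σ + ((n + d + 1 : ℕ) : ℝ) + n = σ + ((n + d + 1 + n : ℕ) : ℝ) by push_cast; ring,
      show ((n + d + 1 : ℕ) : ℝ) - n = ((d + 1 : ℕ) : ℝ) by push_cast; ring,
      show ((n + d + 1 : ℕ) : ℝ) + n = ((n + d + 1 + n : ℕ) : ℝ) by push_cast; ring, h1, h2]
    have e : (-1 : ℝ) ^ (n + d + 1 + n) = (-1) ^ (d + 1) := by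
      rw [show n + d + 1 + n = 2 * n + (d + 1) by ring, pow_add, pow_mul]; norm_num
    have hu : ((-1 : ℝ) ^ (d + 1)) * (-1) ^ (d + 1) = 1 := by rw [← mul_pow]; norm_num
    rw [e]
    generalize (-1 : ℝ) ^ (d + 1) = u at *
    generalize Real.Gamma (σ + 1/2) * 4 ^ σ / (Real.sqrt π * Real.Gamma (-σ)) = c
    generalize Real.Gamma (((d + 1 : ℕ) : ℝ) - σ) / Real.Gamma (((d + 1 : ℕ) : ℝ) + σ + 1) = X
    generalize Real.Gamma (((n + d + 1 + n : ℕ) : ℝ) - σ) /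
      Real.Gamma (((n + d + 1 + n : ℕ) : ℝ) + σ + 1) = Y
    linear_combination c * (X - Y) * hu
  · rw [neg_pos]
    have pq : 0 < Real.sqrt π := Real.sqrt_pos.2 Real.pi_pos
    have g : 0 < Real.Gamma (σ + 1/2) := Real.Gamma_pos_of_pos (by linarith)
    exact div_neg_of_pos_of_neg (by positivity) (mul_neg_of_pos_of_neg pq hs)
end

section
/- Let σ ∈ (0,1). Then there exists a constant C > 0, depending only on σ, such that for all integers m, n ≥ 1 with m ≠ n one has |K^σ_{m,n}| ≤ C·|m−n|^{−2σ−1}. -/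
open Real Filter

theorem rb_symm (a b : ℝ) : rbinom a (a - b) = rbinom a b := by
  unfold rbinom
  rw [sub_sub_cancel, mul_comm]

theorem rb_succ (σ : ℝ) (hσ0 : 0 < σ) (hσ1 : σ < 1) (k : ℕ) (hk : 1 ≤ k) :
    |rbinom (2 * σ) (σ + (k + 1 : ℕ))| =
      |rbinom (2 * σ) (σ + k)| * ((k - σ) / (k + 1 + σ)) := by
  have hk1 : (1 : ℝ) ≤ k := by exact_mod_cast hk
  have e : rbinom (2 * σ) (σ + (k + 1 : ℕ)) =
      rbinom (2 * σ) (σ + k) * (-((k - σ) / (k + 1 + σ))) := by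
    unfold rbinom
    have h1 : Real.Gamma (σ + (k + 1 : ℕ) + 1) = (k + 1 + σ) * Real.Gamma (σ + k + 1) := by
      have := Real.Gamma_add_one (s := σ + k + 1) (by positivity)
      rw [show σ + ((k + 1 : ℕ) : ℝ) + 1 = σ + k + 1 + 1 by push_cast; ring, this]
      ring
    have h2 : Real.Gamma (2 * σ - (σ + k) + 1) =
        (σ - k) * Real.Gamma (2 * σ - (σ + (k + 1 : ℕ)) + 1) := by
      have := Real.Gamma_add_one (s := σ - k) (by linarith)
      rw [show 2 * σ - (σ + k) + 1 = σ - k + 1 by ring, this]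
      congr 2
      push_cast; ring
    rw [h1, h2]
    have h3 : σ - k ≠ 0 := by linarith
    have h4 : (k : ℝ) + 1 + σ ≠ 0 := by positivity
    rw [show ((k : ℝ) - σ) = -(σ - k) by ring, neg_div, neg_neg]
    generalize Real.Gamma (σ + k + 1) = x
    generalize Real.Gamma (2 * σ - (σ + (k + 1 : ℕ)) + 1) = y
    generalize Real.Gamma (2 * σ + 1) = z
    rw [div_mul_div_comm, show x * ((σ - k) * y) * (k + 1 + σ) = ((k + 1 + σ) * x * y) * (σ - k) by ring,
      mul_div_mul_right _ _ h3]
  rw [e, abs_mul, abs_neg, abs_of_nonneg (a := (k - σ) / (k + 1 + σ))]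
  exact div_nonneg (by linarith) (by positivity)

theorem rb_bound (σ : ℝ) (hσ0 : 0 < σ) (hσ1 : σ < 1) (k : ℕ) (hk : 1 ≤ k) :
    |rbinom (2 * σ) (σ + k)| * (k + σ) ^ (2 * σ + 1) ≤
      |rbinom (2 * σ) (σ + 1)| * (1 + σ) ^ (2 * σ + 1) := by
  induction k, hk using Nat.le_induction with
  | base => simp
  | succ k hk ih =>
    refine le_trans ?_ ih
    rw [rb_succ σ hσ0 hσ1 k hk, mul_assoc]
    refine mul_le_mul_of_nonneg_left ?_ (abs_nonneg _)
    have hp : (0 : ℝ) < k + 1 + σ := by positivity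
    have hb := one_add_mul_self_le_rpow_one_add (s := -1 / (k + 1 + σ)) (p := 2 * σ + 1)
      (by rw [le_div_iff₀ hp]; nlinarith [(Nat.cast_nonneg k : (0 : ℝ) ≤ k)]) (by linarith)
    rw [show 1 + (2 * σ + 1) * (-1 / (k + 1 + σ)) = (k - σ) / (k + 1 + σ) by field_simp; ring,
      show 1 + -1 / (k + 1 + σ) = (k + σ) / (k + 1 + σ) by field_simp; ring,
      Real.div_rpow (by positivity) hp.le, le_div_iff₀ (by positivity)] at hb
    push_cast
    exact hb

theorem rb_bound2 (σ : ℝ) (hσ0 : 0 < σ) (hσ1 : σ < 1) (k d : ℕ) (hd : 1 ≤ d) (hk : d ≤ k) :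
    |rbinom (2 * σ) (σ + k)| ≤
      |rbinom (2 * σ) (σ + 1)| * (1 + σ) ^ (2 * σ + 1) * (d : ℝ) ^ (-(2 * σ) - 1) := by
  have hd' : (0 : ℝ) < d := by exact_mod_cast hd
  have hk' : (d : ℝ) ≤ k := by exact_mod_cast hk
  have h := rb_bound σ hσ0 hσ1 k (hd.trans hk)
  rw [show -(2 * σ) - 1 = -(2 * σ + 1) by ring, Real.rpow_neg hd'.le, ← div_eq_mul_inv,
    le_div_iff₀ (by positivity)]
  refine le_trans (mul_le_mul_of_nonneg_left ?_ (abs_nonneg _)) h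
  exact Real.rpow_le_rpow hd'.le (by linarith) (by linarith)

/-- Off-diagonal decay of the kernel: `|K^σ_{m,n}| ≤ C |m-n|^{-2σ-1}`. -/
theorem stmt_15 (σ : ℝ) (hσ0 : 0 < σ) (hσ1 : σ < 1) :
    ∃ C : ℝ, 0 < C ∧ ∀ m n : ℕ, 1 ≤ m → 1 ≤ n → m ≠ n →
      |Kker σ m n| ≤ C * |(m : ℝ) - n| ^ (-(2 * σ) - 1) := by
  set A := |rbinom (2 * σ) (σ + 1)| * (1 + σ) ^ (2 * σ + 1) with hA
  have hA0 : 0 ≤ A := by positivity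
  refine ⟨2 * A + 1, by positivity, fun m n hm hn hmn => ?_⟩
  obtain ⟨d, hd1, hdk, hdab, hdb⟩ : ∃ d : ℕ, 1 ≤ d ∧ d ≤ m + n ∧ |(m : ℝ) - n| = d ∧
      rbinom (2 * σ) (σ + m - n) = rbinom (2 * σ) (σ + d) := by
    rcases lt_or_gt_of_ne hmn with h | h
    · refine ⟨n - m, by omega, by omega, ?_, ?_⟩
      · rw [Nat.cast_sub h.le, abs_sub_comm, abs_of_nonneg]
        simpa using h.le
      · rw [← rb_symm, Nat.cast_sub h.le]
        congr 1; ring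
    · refine ⟨m - n, by omega, by omega, ?_, ?_⟩
      · rw [Nat.cast_sub h.le, abs_of_nonneg]
        simpa using h.le
      · rw [Nat.cast_sub h.le]
        congr 1; ring
  have h1 := rb_bound2 σ hσ0 hσ1 d d hd1 le_rfl
  have h2 := rb_bound2 σ hσ0 hσ1 (m + n) d hd1 hdk
  rw [← hA] at h1 h2
  push_cast at h2
  rw [← add_assoc] at h2
  unfold Kker
  rw [abs_mul, abs_pow, abs_neg, abs_one, one_pow, one_mul, hdb, hdab]
  have h3 := abs_sub (rbinom (2 * σ) (σ + d)) (rbinom (2 * σ) (σ + m + n))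
  have h4 : (0 : ℝ) ≤ (d : ℝ) ^ (-(2 * σ) - 1) := by positivity
  linarith
end

section
/- There exists N ∈ ℕ such that for every integer n ≥ N, (1/4)·1/(n² − 9/16) > 2 − √(1 + 1/n) − √(1 − 1/n); that is, the optimal Hardy-weight W^op_1(n) = (1/4)/(n² − 9/16) is strictly larger than the Keller–Pinchover–Pogorzelski weight W^KPP(n) = 2 − √(1+1/n) − √(1−1/n) near infinity. -/
open Real Filter

lemma sqrt_lower (x : ℝ) (h1 : -(1/10) ≤ x) (h2 : x ≤ 1/10) :
    1 + x/2 - x^2/8 + x^3/16 - x^4/16 ≤ Real.sqrt (1 + x) := by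
  apply Real.le_sqrt_of_sq_le
  have key : 0 ≤ 3/64 + 5/64 * x - 5/256 * x^2 + x^3/128 - x^4/256 := by
    have hx2 : x^2 ≤ 1/100 := by nlinarith
    have hx20 : 0 ≤ x^2 := sq_nonneg x
    have hx3 : -(1/100) ≤ x^3 := by
      have : x^3 = x * x^2 := by ring
      nlinarith
    have hx4 : x^4 ≤ 1/100 := by
      have : x^4 = x^2 * x^2 := by ring
      nlinarith
    linarith
  have h4 : 0 ≤ x^4 := by positivity
  nlinarith [mul_nonneg h4 key]

/-- Near infinity the weight `W^op_1` is strictly larger than the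
Keller--Pinchover--Pogorzelski weight `W^KPP`. -/
theorem stmt_16 :
    ∃ N : ℕ, ∀ n : ℕ, N ≤ n →
      2 - Real.sqrt (1 + 1 / (n : ℝ)) - Real.sqrt (1 - 1 / (n : ℝ)) <
        (1/4) * (1 / ((n : ℝ) ^ 2 - 9/16)) := by
  refine ⟨10, fun n hn => ?_⟩
  have hn' : (10 : ℝ) ≤ n := by exact_mod_cast hn
  have hpos : (0 : ℝ) < n := by linarith
  obtain ⟨x, hx⟩ : ∃ x : ℝ, x = 1 / (n : ℝ) := ⟨_, rfl⟩
  have hx0 : 0 < x := by rw [hx]; positivity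
  have hx1 : x ≤ 1/10 := by
    rw [hx]; exact one_div_le_one_div_of_le (by norm_num) hn'
  have hnx : (n : ℝ) = 1 / x := by rw [hx]; field_simp
  rw [← hx, hnx]
  have a := sqrt_lower x (by linarith) hx1
  have b := sqrt_lower (-x) (by linarith) (by linarith)
  rw [← sub_eq_add_neg] at b
  have hx2 : x^2 ≤ 1/100 := by nlinarith
  have hd : 0 < 1 - 9/16 * x^2 := by linarith
  have e : (1/4) * (1 / ((1 / x) ^ 2 - 9/16)) = (x^2/4) / (1 - 9/16 * x^2) := by
    have h : (1 / x) ^ 2 - 9/16 = (1 - 9/16 * x^2) / x^2 := by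
      field_simp
    rw [h, one_div_div]
    ring
  have f : x^2/4 + x^4/8 < (x^2/4) / (1 - 9/16 * x^2) := by
    rw [lt_div_iff₀ hd]
    have h4 : 0 < x^4 := by positivity
    have h6 : 0 < x^6 := by positivity
    nlinarith
  rw [e]
  nlinarith
end

section
/- Let σ ∈ ℝ with σ > 0 and σ not an integer, and let n ≥ 1 be an integer. Then Σ_{m=−n+1}^{n} (−1)^m·binom(2σ, σ+m) = −2·(−1)^n·n·Γ(2σ)/(Γ(1+σ−n)·Γ(1+σ+n)). -/
open Real Filter

theorem stmt_18_aux (σ : ℝ) (hσ0 : 0 < σ) (hσint : ∀ k : ℤ, σ ≠ (k : ℝ)) (n : ℕ) :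
    (∑ m ∈ Finset.Icc (-(n : ℤ) + 1) (n : ℤ), (-1 : ℝ) ^ m * rbinom (2 * σ) (σ + m)) =
      -2 * (-1 : ℝ) ^ n * n * Real.Gamma (2 * σ) /
        (Real.Gamma (1 + σ - n) * Real.Gamma (1 + σ + n)) := by
  induction n with
  | zero => simp
  | succ n ih =>
    have hI : Finset.Icc (-((n + 1 : ℕ) : ℤ) + 1) ((n + 1 : ℕ) : ℤ) =
        insert ((n : ℤ) + 1) (insert (-(n : ℤ)) (Finset.Icc (-(n : ℤ) + 1) (n : ℤ))) := by
      ext x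
      simp only [Finset.mem_Icc, Finset.mem_insert]
      push_cast
      omega
    rw [hI, Finset.sum_insert (by simp only [Finset.mem_Icc, Finset.mem_insert]; omega),
      Finset.sum_insert (by simp only [Finset.mem_Icc]; omega), ih]
    have hp1 : (-1 : ℝ) ^ ((n : ℤ) + 1) = -(-1 : ℝ) ^ n := by
      rw [zpow_add₀ (by norm_num), zpow_natCast]; simp
    have hp2 : (-1 : ℝ) ^ (-(n : ℤ)) = (-1 : ℝ) ^ n := by
      rw [zpow_neg, zpow_natCast, ← inv_pow]; norm_num
    have hne : σ - n ≠ 0 := fun h => hσint n (by push_cast; linarith)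
    have hne2 : σ + n + 1 ≠ 0 := by positivity
    have hA : Real.Gamma (σ - n) ≠ 0 := by
      apply Real.Gamma_ne_zero
      intro m h
      exact hσint ((n : ℤ) - m) (by push_cast; linarith)
    have hB : Real.Gamma (σ + n + 1) ≠ 0 := (Real.Gamma_pos_of_pos (by positivity)).ne'
    have e1 := Real.Gamma_add_one hne
    have e2 := Real.Gamma_add_one hne2
    have e3 := Real.Gamma_add_one (show 2 * σ ≠ 0 by positivity)
    rw [hp1, hp2]
    unfold rbinom
    push_cast
    rw [show σ + ((n : ℝ) + 1) + 1 = σ + n + 1 + 1 by ring,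
      show 2 * σ - (σ + ((n : ℝ) + 1)) + 1 = σ - n by ring,
      show σ + -(n : ℝ) + 1 = σ - n + 1 by ring,
      show 2 * σ - (σ + -(n : ℝ)) + 1 = σ + n + 1 by ring,
      show 1 + σ - (n : ℝ) = σ - n + 1 by ring,
      show 1 + σ + (n : ℝ) = σ + n + 1 by ring,
      show 1 + σ - ((n : ℝ) + 1) = σ - n by ring,
      show 1 + σ + ((n : ℝ) + 1) = σ + n + 1 + 1 by ring, e1, e2, e3, pow_succ]
    field_simp
    ring

/-- Symmetric alternating sum of binomial coefficients (Lemma A.3). -/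
theorem stmt_18 (σ : ℝ) (hσ0 : 0 < σ) (hσint : ∀ k : ℤ, σ ≠ (k : ℝ))
    (n : ℕ) (hn : 1 ≤ n) :
    (∑ m ∈ Finset.Icc (-(n : ℤ) + 1) (n : ℤ), (-1 : ℝ) ^ m * rbinom (2 * σ) (σ + m)) =
      -2 * (-1 : ℝ) ^ n * n * Real.Gamma (2 * σ) /
        (Real.Gamma (1 + σ - n) * Real.Gamma (1 + σ + n)) := by
  exact stmt_18_aux σ hσ0 hσint n
end

section
/- Let α ∈ ℝ with α not an integer, and let n ≥ 1 be an integer. Then Γ(α−n−1)/Γ(−n−α) − Γ(α+n−1)/Γ(n−α) = 2n·(2α−1)·Γ(n+α−1)/Γ(n−α+2). -/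
open Real Filter

/-- Gamma identity (Lemma A.4). -/
theorem stmt_19 (α : ℝ) (hα : ∀ k : ℤ, α ≠ (k : ℝ)) (n : ℕ) (hn : 1 ≤ n) :
    Real.Gamma (α - n - 1) / Real.Gamma (-(n : ℝ) - α) -
      Real.Gamma (α + n - 1) / Real.Gamma ((n : ℝ) - α) =
    2 * n * (2 * α - 1) * Real.Gamma ((n : ℝ) + α - 1) / Real.Gamma ((n : ℝ) - α + 2) := by
  have key : Real.Gamma (α - n - 1) / Real.Gamma (-(n : ℝ) - α) =
      Real.Gamma ((n : ℝ) + α - 1 + 1 + 1) / Real.Gamma ((n : ℝ) - α + 1 + 1) := by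
    have h1 := Real.Gamma_mul_Gamma_one_sub (α - n - 1)
    have h2 := Real.Gamma_mul_Gamma_one_sub (-(n : ℝ) - α)
    have e1 : 1 - (α - n - 1) = (n : ℝ) - α + 1 + 1 := by ring
    have e2 : 1 - (-(n : ℝ) - α) = (n : ℝ) + α - 1 + 1 + 1 := by ring
    have e3 : Real.sin (π * (α - n - 1)) = Real.sin (π * (-(n : ℝ) - α)) := by
      have : π * (α - n - 1) = (π - π * (-(n : ℝ) - α)) - ((n + 1 : ℕ) : ℝ) * (2 * π) := by
        push_cast
        ring
      rw [this, Real.sin_sub_nat_mul_two_pi, Real.sin_pi_sub]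
    rw [e1, e3] at h1
    rw [e2] at h2
    have n1 : Real.Gamma ((n : ℝ) - α + 1 + 1) ≠ 0 := by
      apply Real.Gamma_ne_zero
      intro m h
      apply hα (n + 2 + m)
      push_cast
      linarith
    have n2 : Real.Gamma (-(n : ℝ) - α) ≠ 0 := by
      apply Real.Gamma_ne_zero
      intro m h
      apply hα (m - n)
      push_cast
      linarith
    rw [div_eq_div_iff n2 n1, h1, ← h2]
    ring
  have a1 : (n : ℝ) + α - 1 ≠ 0 := by
    intro h
    apply hα (1 - n)
    push_cast
    linarith
  have a2 : (n : ℝ) + α - 1 + 1 ≠ 0 := by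
    intro h
    apply hα (-n)
    push_cast
    linarith
  have a3 : (n : ℝ) - α ≠ 0 := by
    intro h
    apply hα n
    push_cast
    linarith
  have a4 : (n : ℝ) - α + 1 ≠ 0 := by
    intro h
    apply hα (n + 1)
    push_cast
    linarith
  have n3 : Real.Gamma ((n : ℝ) - α) ≠ 0 := by
    apply Real.Gamma_ne_zero
    intro m h
    apply hα (n + m)
    push_cast
    linarith
  have e4 : (n : ℝ) - α + 2 = (n : ℝ) - α + 1 + 1 := by ring
  have e5 : α + n - 1 = (n : ℝ) + α - 1 := by ring
  rw [key, e4, e5, Real.Gamma_add_one a2, Real.Gamma_add_one a1, Real.Gamma_add_one a4,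
    Real.Gamma_add_one a3]
  field_simp
  ring
end
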